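/- arXiv:2401.10847 — 2 statements merged into one kernel-verified Lean document; each statement's English description precedes it below -/
import Mathlib

section
/- Let F be a finite graph with at least one edge. Then either (i) there exist an integer r ≥ 1 and, for each residue class C modulo r, an integer k_C, such that sat(n,F) = ((r−1)·n + k_C)/r for every residue class C modulo r and all sufficiently large n ∈ C, or (ii) there is a function g : ℤ_{≥0} → ℝ with g(n)/n → 0 such that sat(n,F) ≥ n − g(n) for all n. Moreover, case (i) occurs if and only if there exists a tree T such that every graph T+e and every graph 2T+e contains a connected component of F that is not contained in T, and in that case r equals the minimum number of vertices of such a tree T. -/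
open SimpleGraph Filter Topology

/-- `H` (on `β`) is contained in `G` (on `α`): `G` has a subgraph isomorphic to `H`. -/
def Contains {α β : Type*} (G : SimpleGraph α) (H : SimpleGraph β) : Prop :=
  ∃ f : β ↪ α, ∀ a b : β, H.Adj a b → G.Adj (f a) (f b)

/-- `G` is `F`-saturated: `G` does not contain `F`, but adding any missing edge creates `F`. -/
def SatSingle {γ α : Type*} (F : SimpleGraph γ) (G : SimpleGraph α) : Prop :=
  (¬ Contains G F) ∧
    ∀ u v : α, u ≠ v → ¬ G.Adj u v → Contains (G ⊔ SimpleGraph.fromEdgeSet {s(u, v)}) F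

/-- The disjoint union of two graphs. -/
def disjUnionG {α β : Type*} (G : SimpleGraph α) (H : SimpleGraph β) : SimpleGraph (α ⊕ β) :=
  SimpleGraph.fromRel (fun x y =>
    match x, y with
    | Sum.inl a, Sum.inl b => G.Adj a b
    | Sum.inr a, Sum.inr b => H.Adj a b
    | _, _ => False)

/-- `H ∪ kT`: the disjoint union of `H` with `k` copies of `T`. -/
def unionCopies {α β : Type*} (H : SimpleGraph α) (k : ℕ) (T : SimpleGraph β) :
    SimpleGraph (α ⊕ Fin k × β) :=
  SimpleGraph.fromRel (fun x y =>
    match x, y with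
    | Sum.inl a, Sum.inl b => H.Adj a b
    | Sum.inr (i, a), Sum.inr (j, b) => i = j ∧ T.Adj a b
    | _, _ => False)

/-- `T` is a tree such that every graph `T+e` (obtained by adding an edge between two
non-adjacent vertices of `T`) and every graph `2T+e` (obtained from the disjoint union of two
copies of `T` by adding an edge with one endpoint in each copy) contains a connected component of
`F` that is not contained in `T`. -/
def GoodTree {nF : ℕ} (F : SimpleGraph (Fin nF)) (t : ℕ) (T : SimpleGraph (Fin t)) : Prop :=
  T.IsTree ∧
  (∀ u v : Fin t, u ≠ v → ¬ T.Adj u v →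
    ∃ c : F.ConnectedComponent, ¬ Contains T (SimpleGraph.induce c.supp F) ∧
      Contains (T ⊔ SimpleGraph.fromEdgeSet {s(u, v)}) (SimpleGraph.induce c.supp F)) ∧
  (∀ u v : Fin t,
    ∃ c : F.ConnectedComponent, ¬ Contains T (SimpleGraph.induce c.supp F) ∧
      Contains (disjUnionG T T ⊔ SimpleGraph.fromEdgeSet {s(Sum.inl u, Sum.inr v)})
        (SimpleGraph.induce c.supp F))

/-- `satF n F` is the minimum number of edges in an `F`-saturated graph on `n` vertices. -/
noncomputable def satF {nF : ℕ} (n : ℕ) (F : SimpleGraph (Fin nF)) : ℕ :=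
  sInf {m | ∃ G : SimpleGraph (Fin n), SatSingle F G ∧ Nat.card G.edgeSet = m}

/-- Case (i) holds with the particular value `r`. -/
def CaseIWith {nF : ℕ} (F : SimpleGraph (Fin nF)) (r : ℕ) : Prop :=
  1 ≤ r ∧ ∃ k : ℕ → ℤ, ∀ c : ℕ, c < r →
    ∀ᶠ n : ℕ in atTop, n % r = c → (satF n F : ℤ) * r = ((r : ℤ) - 1) * n + k c

/-- Case (ii): `sat(n,F) ≥ n + o(n)`. -/
def CaseII {nF : ℕ} (F : SimpleGraph (Fin nF)) : Prop :=
  ∃ g : ℕ → ℝ, Tendsto (fun n : ℕ => g n / n) atTop (𝓝 0) ∧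
    ∀ n : ℕ, (n : ℝ) - g n ≤ (satF n F : ℝ)

section Basics

variable {α β γ δ : Type*}

@[simp] theorem unionCopies_adj_inl_inl (H : SimpleGraph α) (k : ℕ) (T : SimpleGraph β) (a b : α) :
    (unionCopies H k T).Adj (Sum.inl a) (Sum.inl b) ↔ H.Adj a b := by
  simp only [unionCopies, SimpleGraph.fromRel_adj, ne_eq, Sum.inl.injEq]
  exact ⟨fun h => h.2.elim id fun h => h.symm, fun h => ⟨h.ne, Or.inl h⟩⟩

@[simp] theorem unionCopies_adj_inr_inr (H : SimpleGraph α) (k : ℕ) (T : SimpleGraph β)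
    (p q : Fin k × β) :
    (unionCopies H k T).Adj (Sum.inr p) (Sum.inr q) ↔ p.1 = q.1 ∧ T.Adj p.2 q.2 := by
  obtain ⟨i, a⟩ := p
  obtain ⟨j, b⟩ := q
  simp only [unionCopies, SimpleGraph.fromRel_adj, ne_eq, Sum.inr.injEq, Prod.mk.injEq]
  exact ⟨fun h => h.2.elim id fun h => ⟨h.1.symm, h.2.symm⟩,
    fun h => ⟨fun h' => h.2.ne h'.2, Or.inl h⟩⟩

@[simp] theorem unionCopies_not_adj_inl_inr (H : SimpleGraph α) (k : ℕ) (T : SimpleGraph β)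
    (a : α) (q : Fin k × β) : ¬ (unionCopies H k T).Adj (Sum.inl a) (Sum.inr q) := by
  simp [unionCopies]

@[simp] theorem unionCopies_not_adj_inr_inl (H : SimpleGraph α) (k : ℕ) (T : SimpleGraph β)
    (a : α) (q : Fin k × β) : ¬ (unionCopies H k T).Adj (Sum.inr q) (Sum.inl a) := by
  simp [unionCopies]

@[simp] theorem disjUnionG_adj_inl_inl (G : SimpleGraph α) (H : SimpleGraph β) (a b : α) :
    (disjUnionG G H).Adj (Sum.inl a) (Sum.inl b) ↔ G.Adj a b := by
  simp only [disjUnionG, SimpleGraph.fromRel_adj, ne_eq, Sum.inl.injEq]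
  exact ⟨fun h => h.2.elim id fun h => h.symm, fun h => ⟨h.ne, Or.inl h⟩⟩

@[simp] theorem disjUnionG_adj_inr_inr (G : SimpleGraph α) (H : SimpleGraph β) (a b : β) :
    (disjUnionG G H).Adj (Sum.inr a) (Sum.inr b) ↔ H.Adj a b := by
  simp only [disjUnionG, SimpleGraph.fromRel_adj, ne_eq, Sum.inr.injEq]
  exact ⟨fun h => h.2.elim id fun h => h.symm, fun h => ⟨h.ne, Or.inl h⟩⟩

@[simp] theorem disjUnionG_not_adj_inl_inr (G : SimpleGraph α) (H : SimpleGraph β) (a : α) (b : β) :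
    ¬ (disjUnionG G H).Adj (Sum.inl a) (Sum.inr b) := by
  simp [disjUnionG]

@[simp] theorem disjUnionG_not_adj_inr_inl (G : SimpleGraph α) (H : SimpleGraph β) (a : α) (b : β) :
    ¬ (disjUnionG G H).Adj (Sum.inr b) (Sum.inl a) := by
  simp [disjUnionG]

/-- Adjacency in a graph with one extra edge. -/
theorem sup_fromEdgeSet_adj (G : SimpleGraph α) (u v x y : α) :
    (G ⊔ SimpleGraph.fromEdgeSet {s(u, v)}).Adj x y ↔
      G.Adj x y ∨ (x ≠ y ∧ ((x = u ∧ y = v) ∨ (x = v ∧ y = u))) := by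
  simp only [SimpleGraph.sup_adj, SimpleGraph.fromEdgeSet_adj, Set.mem_singleton_iff,
    Sym2.eq_iff]
  tauto

theorem Contains.of_injective {G : SimpleGraph α} {H : SimpleGraph β} (g : β → α)
    (hg : Function.Injective g) (h : ∀ a b, H.Adj a b → G.Adj (g a) (g b)) : Contains G H :=
  ⟨⟨g, hg⟩, h⟩

theorem Contains.trans {G : SimpleGraph α} {H : SimpleGraph β} {K : SimpleGraph γ}
    (h₁ : Contains G H) (h₂ : Contains H K) : Contains G K := by
  obtain ⟨f, hf⟩ := h₁
  obtain ⟨g, hg⟩ := h₂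
  exact ⟨g.trans f, fun a b h => hf _ _ (hg _ _ h)⟩

theorem contains_of_le {G H : SimpleGraph α} (h : H ≤ G) : Contains G H :=
  ⟨Function.Embedding.refl _, fun _ _ hab => h hab⟩

/-- A graph isomorphism stays one after adding corresponding edges. -/
theorem contains_sup_edge_of_iso {G : SimpleGraph α} {H : SimpleGraph β} (e : G ≃g H) (u v : α) :
    Contains (H ⊔ SimpleGraph.fromEdgeSet {s(e u, e v)})
      (G ⊔ SimpleGraph.fromEdgeSet {s(u, v)}) := by
  refine ⟨e.toEquiv.toEmbedding, fun a b h => ?_⟩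
  rw [sup_fromEdgeSet_adj] at h ⊢
  rcases h with h | ⟨hne, h⟩
  · exact Or.inl (e.map_adj_iff.2 h)
  · refine Or.inr ⟨fun h' => hne (e.injective h'), ?_⟩
    rcases h with ⟨rfl, rfl⟩ | ⟨rfl, rfl⟩
    · exact Or.inl ⟨rfl, rfl⟩
    · exact Or.inr ⟨rfl, rfl⟩

theorem contains_of_iso {G : SimpleGraph α} {H : SimpleGraph β} (e : G ≃g H) : Contains H G :=
  ⟨e.toEquiv.toEmbedding, fun _ _ h => e.map_adj_iff.2 h⟩

theorem SatSingle.of_iso {F : SimpleGraph γ} {G : SimpleGraph α} {H : SimpleGraph β} (e : G ≃g H)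
    (h : SatSingle F G) : SatSingle F H := by
  refine ⟨fun hc => h.1 ((contains_of_iso e.symm).trans hc), fun u v huv hadj => ?_⟩
  have h₁ := h.2 (e.symm u) (e.symm v) (fun h' => huv (e.symm.injective h'))
    (fun h' => hadj (e.symm.map_adj_iff.1 h'))
  have h₂ := contains_sup_edge_of_iso e (e.symm u) (e.symm v)
  simp only [RelIso.apply_symm_apply] at h₂
  exact h₂.trans h₁

theorem satF_le {nF n : ℕ} {F : SimpleGraph (Fin nF)} [Fintype α] (hn : Fintype.card α = n)
    {G : SimpleGraph α} (h : SatSingle F G) : satF n F ≤ Nat.card G.edgeSet := by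
  let e : α ≃ Fin n := Fintype.equivFinOfCardEq hn
  let i : G ≃g G.map e.toEmbedding := SimpleGraph.Iso.map e G
  exact Nat.sInf_le ⟨_, h.of_iso i, (Nat.card_congr i.mapEdgeSet).symm⟩

/-- Every graph avoiding `F` within a down-closed finite family extends to a maximal one. -/
theorem exists_maximal_graph [Finite α] (p : SimpleGraph α → Prop) (G₀ : SimpleGraph α)
    (h₀ : p G₀) : ∃ G, G₀ ≤ G ∧ p G ∧ ∀ G', G < G' → ¬ p G' := by
  obtain ⟨G, hle, hG⟩ := (Set.toFinite {G : SimpleGraph α | p G}).exists_le_maximal h₀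
  exact ⟨G, hle, hG.prop, fun G' hlt hp => hlt.not_ge (hG.le_of_ge hp hlt.le)⟩

theorem lt_sup_edge {G : SimpleGraph α} {u v : α} (huv : u ≠ v) (h : ¬ G.Adj u v) :
    G < G ⊔ SimpleGraph.fromEdgeSet {s(u, v)} := by
  refine lt_of_le_of_ne le_sup_left fun he => h ?_
  rw [he, sup_fromEdgeSet_adj]
  exact Or.inr ⟨huv, Or.inl ⟨rfl, rfl⟩⟩

theorem exists_adj_of_card_edgeSet {nF : ℕ} {F : SimpleGraph (Fin nF)}
    (hF : 1 ≤ Nat.card F.edgeSet) : ∃ a b, F.Adj a b := by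
  have : Nonempty F.edgeSet := (Nat.card_pos_iff.1 hF).1
  obtain ⟨⟨e, he⟩⟩ := this
  induction e with
  | _ a b => exact ⟨a, b, he⟩

theorem exists_satF {nF : ℕ} {F : SimpleGraph (Fin nF)} (hF : 1 ≤ Nat.card F.edgeSet) (n : ℕ) :
    ∃ G : SimpleGraph (Fin n), SatSingle F G ∧ Nat.card G.edgeSet = satF n F := by
  obtain ⟨a, b, hab⟩ := exists_adj_of_card_edgeSet hF
  obtain ⟨G, -, hG, hmax⟩ := exists_maximal_graph (fun G : SimpleGraph (Fin n) => ¬ Contains G F) ⊥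
    (fun ⟨f, hf⟩ => hf a b hab)
  have hsat : SatSingle F G := ⟨hG, fun u v huv hadj => not_not.1 (hmax _ (lt_sup_edge huv hadj))⟩
  exact Nat.sInf_mem (s := {m | ∃ G : SimpleGraph (Fin n), SatSingle F G ∧
    Nat.card G.edgeSet = m}) ⟨_, G, hsat, rfl⟩

/-- A set closed under adjacency captures the image of a connected component. -/
theorem mem_of_reachable_of_closed {F : SimpleGraph γ} {P : γ → Prop}
    (hP : ∀ a b, F.Adj a b → P a → P b) {a b : γ} (h : F.Reachable a b) (ha : P a) : P b := by
  obtain ⟨w⟩ := h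
  induction w with
  | nil => exact ha
  | cons hadj _ ih => exact ih (hP _ _ hadj ha)

end Basics

section Copies

variable {α β γ : Type*}

/-- A map from `nF` vertices misses some copy of `T`, even outside a few excluded copies. -/
theorem exists_unused_copy {nF k : ℕ} (f : Fin nF → α ⊕ Fin k × β) (S : Finset (Fin k))
    (h : nF + S.card < k) : ∃ i ∉ S, ∀ a t, f a ≠ Sum.inr (i, t) := by
  classical
  let used : Finset (Fin k) := Finset.univ.biUnion fun a : Fin nF =>
    match f a with
    | Sum.inl _ => ∅
    | Sum.inr p => {p.1}
  have hused : used.card ≤ nF := by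
    refine Finset.card_biUnion_le.trans ?_
    have : ∀ a ∈ (Finset.univ : Finset (Fin nF)), (match f a with
      | Sum.inl _ => (∅ : Finset (Fin k))
      | Sum.inr p => {p.1}).card ≤ 1 := by
      intro a _
      cases f a <;> simp
    simpa using Finset.sum_le_card_nsmul _ _ 1 this
  obtain ⟨i, hi⟩ : ∃ i, i ∉ S ∪ used := by
    by_contra! hall
    have h₁ : (Finset.univ : Finset (Fin k)) ⊆ S ∪ used := fun i _ => hall i
    have h₂ := Finset.card_le_card h₁
    have h₃ := Finset.card_union_le S used
    simp only [Finset.card_univ, Fintype.card_fin] at h₂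
    omega
  simp only [Finset.mem_union, not_or] at hi
  refine ⟨i, hi.1, fun a t hat => hi.2 ?_⟩
  simp only [used, Finset.mem_biUnion, Finset.mem_univ, true_and]
  exact ⟨a, by simp [hat]⟩

/-- Inserting an extra copy of `T` at position `i`. -/
def skipCopy (α β : Type*) {k : ℕ} (i : Fin (k + 1)) : α ⊕ Fin k × β ↪ α ⊕ Fin (k + 1) × β where
  toFun := Sum.map id (Prod.map i.succAbove id)
  inj' := Function.injective_id.sumMap
    (Function.Injective.prodMap Fin.succAbove_right_injective Function.injective_id)

theorem skipCopy_adj_iff (H : SimpleGraph α) (T : SimpleGraph β) {k : ℕ} (i : Fin (k + 1))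
    (x y : α ⊕ Fin k × β) :
    (unionCopies H (k + 1) T).Adj (skipCopy α β i x) (skipCopy α β i y) ↔
      (unionCopies H k T).Adj x y := by
  rcases x with x | ⟨a, x⟩ <;> rcases y with y | ⟨b, y⟩ <;>
    simp [skipCopy]

theorem exists_skipCopy_eq {k : ℕ} (i : Fin (k + 1)) (x : α ⊕ Fin (k + 1) × β)
    (hx : ∀ t, x ≠ Sum.inr (i, t)) : ∃ y, skipCopy α β i y = x := by
  rcases x with x | ⟨j, x⟩
  · exact ⟨Sum.inl x, rfl⟩
  · have hj : j ≠ i := fun h => hx x (by rw [h])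
    obtain ⟨j', rfl⟩ := Fin.exists_succAbove_eq hj
    exact ⟨Sum.inr (j', x), rfl⟩

theorem contains_unionCopies_of_succ {nF k : ℕ} {F : SimpleGraph (Fin nF)} (H : SimpleGraph α)
    (T : SimpleGraph β) (hk : nF ≤ k) (h : Contains (unionCopies H (k + 1) T) F) :
    Contains (unionCopies H k T) F := by
  obtain ⟨f, hf⟩ := h
  obtain ⟨i, -, hi⟩ := exists_unused_copy f ∅ (by simp; omega)
  choose g hg using fun a => exists_skipCopy_eq i (f a) (hi a)
  refine .of_injective g (fun a b hab => f.injective (by rw [← hg a, ← hg b, hab]))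
    fun a b hab => ?_
  rw [← skipCopy_adj_iff H T i]
  simpa [hg] using hf a b hab

/-- Adding one more copy of `T` preserves saturation once there are many copies. -/
theorem SatSingle.unionCopies_succ {nF k : ℕ} {F : SimpleGraph (Fin nF)} {H : SimpleGraph α}
    {T : SimpleGraph β} (hk : nF + 2 ≤ k) (h : SatSingle F (unionCopies H k T)) :
    SatSingle F (unionCopies H (k + 1) T) := by
  refine ⟨fun hc => h.1 (contains_unionCopies_of_succ H T (by omega) hc), fun u v huv hadj => ?_⟩
  obtain ⟨i, -, hi⟩ := exists_unused_copy (k := k + 1) ![u, v] ∅ (by simp; omega)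
  obtain ⟨u', rfl⟩ := exists_skipCopy_eq i u (hi 0)
  obtain ⟨v', rfl⟩ := exists_skipCopy_eq i v (hi 1)
  have h₁ := h.2 u' v' (fun h' => huv (by rw [h'])) (fun h' => hadj ((skipCopy_adj_iff ..).2 h'))
  refine Contains.trans ⟨skipCopy α β i, fun a b hab => ?_⟩ h₁
  rw [sup_fromEdgeSet_adj] at hab ⊢
  rw [skipCopy_adj_iff]
  simpa using hab

/-- The edges of `H ∪ kT`. -/
theorem card_edgeSet_unionCopies [Finite α] [Finite β] (H : SimpleGraph α) (k : ℕ)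
    (T : SimpleGraph β) : Nat.card (unionCopies H k T).edgeSet =
      Nat.card H.edgeSet + k * Nat.card T.edgeSet := by
  classical
  have := Fintype.ofFinite α
  have := Fintype.ofFinite β
  have key : ∀ {V : Type _} [Fintype V] (G : SimpleGraph V),
      2 * Nat.card G.edgeSet = ∑ v, ∑ w, if G.Adj v w then 1 else 0 := by
    intro V _ G
    rw [Nat.card_eq_fintype_card, ← edgeFinset_card, ← sum_degrees_eq_twice_card_edges]
    refine Finset.sum_congr rfl fun v _ => ?_
    rw [← card_neighborFinset_eq_degree, neighborFinset_eq_filter, Finset.card_filter]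
  have h₁ : 2 * Nat.card H.edgeSet = ∑ v, ∑ w, if H.Adj v w then 1 else 0 := by
    rw [Nat.card_eq_fintype_card, ← edgeFinset_card, ← sum_degrees_eq_twice_card_edges]
    refine Finset.sum_congr rfl fun v _ => ?_
    rw [← card_neighborFinset_eq_degree, neighborFinset_eq_filter, Finset.card_filter]
  have h₂ : 2 * Nat.card T.edgeSet = ∑ v, ∑ w, if T.Adj v w then 1 else 0 := by
    rw [Nat.card_eq_fintype_card, ← edgeFinset_card, ← sum_degrees_eq_twice_card_edges]
    refine Finset.sum_congr rfl fun v _ => ?_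
    rw [← card_neighborFinset_eq_degree, neighborFinset_eq_filter, Finset.card_filter]
  have h := key (unionCopies H k T)
  simp only [Fintype.sum_sum_type, unionCopies_adj_inl_inl, unionCopies_adj_inr_inr,
    unionCopies_not_adj_inl_inr, unionCopies_not_adj_inr_inl, if_false, Finset.sum_const_zero,
    add_zero, zero_add, Fintype.sum_prod_type, ← h₁] at h
  have h₃ : ∀ x : Fin k, ∑ a : β, ∑ y : Fin k, ∑ b : β, (if x = y ∧ T.Adj a b then 1 else 0) =
      2 * Nat.card T.edgeSet := by
    intro x
    rw [h₂]
    refine Finset.sum_congr rfl fun a _ => ?_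
    rw [Finset.sum_eq_single x]
    · simp
    · intro y _ hy
      simp [hy.symm]
    · simp
  rw [Finset.sum_congr rfl fun x _ => h₃ x] at h
  simp only [Finset.sum_const, Finset.card_univ, Fintype.card_fin, smul_eq_mul] at h
  nlinarith

/-- Adding an edge to a saturated `H ∪ kT` creates a copy of `F` in which the component through
the new edge is not contained in `T`. -/
theorem SatSingle.exists_component {nF k : ℕ} {F : SimpleGraph (Fin nF)} {H : SimpleGraph α}
    {T : SimpleGraph β} (hk : nF + 1 ≤ k) (h : SatSingle F (unionCopies H k T))
    {x y : α ⊕ Fin k × β} (hxy : x ≠ y) (hadj : ¬ (unionCopies H k T).Adj x y) :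
    ∃ (f : Fin nF ↪ α ⊕ Fin k × β) (a : Fin nF), f a = x ∧
      (∀ p q, F.Adj p q → (unionCopies H k T ⊔ SimpleGraph.fromEdgeSet {s(x, y)}).Adj (f p) (f q)) ∧
      ¬ Contains T (SimpleGraph.induce (F.connectedComponentMk a).supp F) := by
  classical
  obtain ⟨f, hf⟩ := h.2 x y hxy hadj
  have huse : ∃ a b, F.Adj a b ∧ f a = x ∧ f b = y := by
    by_contra! hno
    refine h.1 ⟨f, fun p q hpq => ?_⟩
    rcases (sup_fromEdgeSet_adj ..).1 (hf p q hpq) with h' | ⟨-, ⟨hp, hq⟩ | ⟨hp, hq⟩⟩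
    · exact h'
    · exact absurd hq (hno p q hpq hp)
    · exact absurd hp (hno q p hpq.symm hq)
  obtain ⟨a, b, hab, ha, hb⟩ := huse
  refine ⟨f, a, ha, hf, ?_⟩
  rintro ⟨g, hg⟩
  obtain ⟨i, -, hi⟩ := exists_unused_copy f ∅ (by simp; omega)
  apply h.1
  refine .of_injective (fun p => if hp : p ∈ (F.connectedComponentMk a).supp then
    Sum.inr (i, g ⟨p, hp⟩) else f p) ?_ ?_
  · intro p q hpq
    by_cases hp : p ∈ (F.connectedComponentMk a).supp <;>
      by_cases hq : q ∈ (F.connectedComponentMk a).supp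
    · simp only [hp, hq, dite_true, Sum.inr.injEq, Prod.mk.injEq, true_and] at hpq
      simpa using g.injective hpq
    · simp only [hp, hq, dite_true, dite_false] at hpq
      exact absurd hpq.symm (hi q _)
    · simp only [hp, hq, dite_true, dite_false] at hpq
      exact absurd hpq (hi p _)
    · simp only [hp, hq, dite_false] at hpq
      exact f.injective hpq
  · intro p q hpq
    have hiff : p ∈ (F.connectedComponentMk a).supp ↔ q ∈ (F.connectedComponentMk a).supp :=
      ConnectedComponent.mem_supp_congr_adj _ hpq
    by_cases hp : p ∈ (F.connectedComponentMk a).supp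
    · have hq := hiff.1 hp
      rw [dif_pos hp, dif_pos hq, unionCopies_adj_inr_inr]
      exact ⟨rfl, hg _ _ hpq⟩
    · have hq := fun h => hp (hiff.2 h)
      rw [dif_neg hp, dif_neg hq]
      have ha' : a ∈ (F.connectedComponentMk a).supp := rfl
      have hb' := (ConnectedComponent.mem_supp_congr_adj _ hab).1 ha'
      rcases (sup_fromEdgeSet_adj ..).1 (hf p q hpq) with h' | ⟨-, ⟨h₁, -⟩ | ⟨h₁, -⟩⟩
      · exact h'
      · exact absurd (f.injective (h₁.trans ha.symm) ▸ ha') hp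
      · exact absurd (f.injective (h₁.trans hb.symm) ▸ hb') hp

theorem SatSingle.goodTree {nF k t : ℕ} {F : SimpleGraph (Fin nF)} {H : SimpleGraph α}
    {T : SimpleGraph (Fin t)} (hT : T.IsTree) (hk : nF + 2 ≤ k)
    (h : SatSingle F (unionCopies H k T)) : GoodTree F t T := by
  refine ⟨hT, fun u v huv hadj => ?_, fun u v => ?_⟩
  · let i : Fin k := ⟨0, by omega⟩
    obtain ⟨f, a, ha, hf, hc⟩ := h.exists_component (by omega)
      (x := Sum.inr (i, u)) (y := Sum.inr (i, v)) (by simpa using huv) (by simpa using hadj)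
    refine ⟨_, hc, ?_⟩
    have hmem : ∀ d : (F.connectedComponentMk a).supp, ∃ s, f d = Sum.inr (i, s) := by
      rintro ⟨d, hd⟩
      refine mem_of_reachable_of_closed (P := fun d => ∃ s, f d = Sum.inr (i, s)) ?_
        (ConnectedComponent.exact hd).symm ⟨u, ha⟩
      rintro p q hpq ⟨s, hs⟩
      have := hf p q hpq
      rw [hs, sup_fromEdgeSet_adj] at this
      rcases this with h' | ⟨-, ⟨-, h₁⟩ | ⟨-, h₁⟩⟩
      · rcases hq : f q with z | ⟨j, z⟩
        · rw [hq] at h'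
          exact absurd h' (by simp)
        · rw [hq, unionCopies_adj_inr_inr] at h'
          exact ⟨z, by rw [show i = j from h'.1]⟩
      · exact ⟨_, h₁⟩
      · exact ⟨_, h₁⟩
    choose g hg using hmem
    refine .of_injective g (fun p q hpq => Subtype.ext (f.injective (by rw [hg p, hg q, hpq])))
      fun p q hpq => ?_
    have := hf p q hpq
    rw [hg, hg, sup_fromEdgeSet_adj] at this
    rw [sup_fromEdgeSet_adj]
    simpa using this
  · let i : Fin k := ⟨0, by omega⟩
    let j : Fin k := ⟨1, by omega⟩
    have hij : i ≠ j := by simp [i, j]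
    let φ : Fin t ⊕ Fin t → α ⊕ Fin k × Fin t := fun s =>
      s.elim (fun x => Sum.inr (i, x)) (fun x => Sum.inr (j, x))
    have hφ : Function.Injective φ := by
      rintro (x | x) (y | y) hxy <;> simp_all [φ]
    obtain ⟨f, a, ha, hf, hc⟩ := h.exists_component (by omega)
      (x := φ (Sum.inl u)) (y := φ (Sum.inr v)) (by simp [φ, hij]) (by simp [φ, hij])
    refine ⟨_, hc, ?_⟩
    have hmem : ∀ d : (F.connectedComponentMk a).supp, ∃ s, f d = φ s := by
      rintro ⟨d, hd⟩
      refine mem_of_reachable_of_closed (P := fun d => ∃ s, f d = φ s) ?_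
        (ConnectedComponent.exact hd).symm ⟨_, ha⟩
      rintro p q hpq ⟨s, hs⟩
      have := hf p q hpq
      rw [hs, sup_fromEdgeSet_adj] at this
      rcases this with h' | ⟨-, ⟨-, h₁⟩ | ⟨-, h₁⟩⟩
      · rcases hq : f q with z | ⟨l, z⟩
        · rw [hq] at h'
          rcases s with s | s <;> exact absurd h' (by simp [φ])
        · rw [hq] at h'
          rcases s with s | s <;> simp only [φ, Sum.elim_inl, Sum.elim_inr,
            unionCopies_adj_inr_inr] at h'
          · exact ⟨Sum.inl z, by simp [φ, ← h'.1]⟩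
          · exact ⟨Sum.inr z, by simp [φ, ← h'.1]⟩
      · exact ⟨_, h₁⟩
      · exact ⟨_, h₁⟩
    choose g hg using hmem
    refine .of_injective g (fun p q hpq => Subtype.ext (f.injective (by rw [hg p, hg q, hpq])))
      fun p q hpq => ?_
    have := hf p q hpq
    rw [hg, hg, sup_fromEdgeSet_adj, hφ.eq_iff, hφ.eq_iff, hφ.eq_iff, hφ.eq_iff, hφ.ne_iff] at this
    rw [sup_fromEdgeSet_adj]
    refine this.imp (fun h' => ?_) id
    revert h'
    rcases g p with x | x <;> rcases g q with y | y <;> simp [φ, hij, hij.symm]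

/-- A graph with `k` distinct components isomorphic to `T` is of the form `H ∪ kT`. -/
theorem nonempty_iso_unionCopies {V : Type*} (G : SimpleGraph V) {k : ℕ} (T : SimpleGraph β)
    (C : Fin k ↪ G.ConnectedComponent) (e : ∀ i, T ≃g (C i).toSimpleGraph) :
    Nonempty (unionCopies (G.induce {v | ∀ i, G.connectedComponentMk v ≠ C i}) k T ≃g G) := by
  have hmem : ∀ i a, G.connectedComponentMk ((e i a : (C i)) : V) = C i := fun i a => (e i a).2
  let φ : {v | ∀ i, G.connectedComponentMk v ≠ C i} ⊕ Fin k × β → V :=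
    Sum.elim (fun v => v.1) (fun p => ((e p.1 p.2 : (C p.1)) : V))
  have hinj : Function.Injective φ := by
    rintro (x | ⟨i, x⟩) (y | ⟨j, y⟩) hxy
    · exact congrArg Sum.inl (Subtype.ext hxy)
    · exact absurd (by rw [show x.1 = _ from hxy]; exact hmem j y) (x.2 j)
    · exact absurd (by rw [← show _ = y.1 from hxy]; exact hmem i x) (y.2 i)
    · have hxy' : ((e i x : (C i)) : V) = ((e j y : (C j)) : V) := hxy
      have hij : i = j := C.injective (by rw [← hmem i x, ← hmem j y, hxy'])
      subst hij
      rw [(e i).injective (Subtype.ext hxy')]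
  have hsurj : Function.Surjective φ := by
    intro v
    by_cases hv : ∀ i, G.connectedComponentMk v ≠ C i
    · exact ⟨Sum.inl ⟨v, hv⟩, rfl⟩
    · push Not at hv
      obtain ⟨i, hi⟩ := hv
      exact ⟨Sum.inr (i, (e i).symm ⟨v, hi⟩), by simp [φ]⟩
  refine ⟨⟨Equiv.ofBijective φ ⟨hinj, hsurj⟩, ?_⟩⟩
  rintro (x | ⟨i, x⟩) (y | ⟨j, y⟩)
  · rw [unionCopies_adj_inl_inl]
    exact Iff.rfl
  · simp only [unionCopies_not_adj_inl_inr, iff_false]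
    intro h
    exact x.2 j ((ConnectedComponent.sound h.reachable).trans (hmem j y))
  · simp only [unionCopies_not_adj_inr_inl, iff_false]
    intro h
    exact y.2 i ((ConnectedComponent.sound h.symm.reachable).trans (hmem i x))
  · simp only [unionCopies_adj_inr_inr]
    constructor
    · intro h
      have hij : i = j := C.injective
        ((hmem i x).symm.trans ((ConnectedComponent.sound h.reachable).trans (hmem j y)))
      subst hij
      exact ⟨rfl, (e i).map_adj_iff.1 h⟩
    · rintro ⟨rfl, h⟩
      exact (e i).map_adj_iff.2 h

end Copies

section Counting

theorem sum_card_components {V : Type*} [Fintype V] (G : SimpleGraph V)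
    [Fintype G.ConnectedComponent] : ∑ c : G.ConnectedComponent, Nat.card c = Fintype.card V := by
  classical
  rw [← Finset.card_univ, Finset.card_eq_sum_card_fiberwise (f := G.connectedComponentMk)
    (t := Finset.univ) (fun _ _ => Finset.mem_coe.2 (Finset.mem_univ _))]
  refine Finset.sum_congr rfl fun c _ => ?_
  rw [Nat.card_eq_fintype_card]
  exact Fintype.card_subtype _

theorem sum_card_edgeSet_components {V : Type*} [Fintype V] (G : SimpleGraph V)
    [Fintype G.ConnectedComponent] :
    ∑ c : G.ConnectedComponent, Nat.card c.toSimpleGraph.edgeSet = Nat.card G.edgeSet := by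
  classical
  have hc : ∀ c : G.ConnectedComponent, 2 * Nat.card c.toSimpleGraph.edgeSet =
      ∑ v with G.connectedComponentMk v = c, G.degree v := by
    intro c
    rw [Nat.card_eq_fintype_card, ← edgeFinset_card, ← sum_degrees_eq_twice_card_edges]
    have hmem : ∀ x, x ∈ Finset.univ.filter (fun v => G.connectedComponentMk v = c) ↔ x ∈ c := by
      intro x
      simp only [Finset.mem_filter, Finset.mem_univ, true_and]
      rfl
    rw [Finset.sum_subtype _ hmem]
    refine Finset.sum_congr rfl fun v _ => ?_
    have := degree_induce_of_neighborSet_subset (G := G) (s := c.supp) (v := v)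
      (fun w hw => (ConnectedComponent.mem_supp_congr_adj c hw).1 v.2)
    convert this <;> rfl
  have h := Finset.sum_fiberwise (Finset.univ : Finset V) G.connectedComponentMk
    (fun v => G.degree v)
  rw [← Finset.sum_congr rfl fun c _ => hc c, ← Finset.mul_sum,
    sum_degrees_eq_twice_card_edges, edgeFinset_card, ← Nat.card_eq_fintype_card] at h
  omega

/-- If no small tree occurs often as a component, the graph has almost as many edges as
vertices. -/
theorem exists_edge_lower_bound (S k₀ : ℕ) : ∃ M : ℕ, ∀ (n : ℕ) (G : SimpleGraph (Fin n)),
    (∀ s ≤ S, ∀ T : SimpleGraph (Fin s), T.IsTree →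
      ¬ ∃ C : Fin k₀ ↪ G.ConnectedComponent, ∀ i, Nonempty (T ≃g (C i).toSimpleGraph)) →
    S * n ≤ (S + 1) * Nat.card G.edgeSet + M := by
  classical
  refine ⟨(S + 1) * (k₀ * Fintype.card (Σ s : Fin (S + 1), SimpleGraph (Fin s))),
    fun n G hG => ?_⟩
  have : Fintype G.ConnectedComponent := Fintype.ofFinite _
  let small : Finset G.ConnectedComponent :=
    Finset.univ.filter fun c => c.toSimpleGraph.IsTree ∧ Nat.card c ≤ S
  have hmodel : ∀ c : G.ConnectedComponent, ∃ x : (Σ s : Fin (S + 1), SimpleGraph (Fin s)),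
      c ∈ small → Nonempty (x.2 ≃g c.toSimpleGraph) := by
    intro c
    by_cases hc : c ∈ small
    · have hcard : Nat.card c ≤ S := (Finset.mem_filter.1 hc).2.2
      let e : c ≃ Fin (Nat.card c) := Finite.equivFin c
      exact ⟨⟨⟨Nat.card c, by omega⟩, c.toSimpleGraph.map e.toEmbedding⟩,
        fun _ => ⟨(SimpleGraph.Iso.map e _).symm⟩⟩
    · exact ⟨⟨0, ⊥⟩, fun h => absurd h hc⟩
  choose m hm using hmodel
  have hsmall : small.card ≤ k₀ * Fintype.card (Σ s : Fin (S + 1), SimpleGraph (Fin s)) := by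
    rw [← Finset.card_univ]
    refine Finset.card_le_mul_card_image_of_maps_to (f := m) (fun _ _ => Finset.mem_univ _) _ ?_
    rintro ⟨s, T⟩ -
    by_contra! hlt
    have hpos : 0 < (small.filter fun c => m c = ⟨s, T⟩).card := by omega
    obtain ⟨c, hc⟩ := Finset.card_pos.1 hpos
    obtain ⟨hc₁, hc₂⟩ := Finset.mem_filter.1 hc
    have hiso : ∀ c ∈ small.filter (fun c => m c = ⟨s, T⟩), Nonempty (T ≃g c.toSimpleGraph) := by
      intro c hc
      obtain ⟨hc₁, hc₂⟩ := Finset.mem_filter.1 hc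
      have := hm c hc₁
      rwa [hc₂] at this
    have hT : T.IsTree := (hiso c hc).some.isTree_iff.2 (Finset.mem_filter.1 hc₁).2.1
    refine hG s (by omega) T hT ?_
    let e := (small.filter fun c => m c = ⟨s, T⟩).equivFin.symm
    exact ⟨(Fin.castLEEmb hlt.le).trans (e.toEmbedding.trans (Function.Embedding.subtype _)),
      fun i => hiso _ (e _).2⟩
  have hcomp : ∀ c : G.ConnectedComponent, S * Nat.card c ≤
      (S + 1) * Nat.card c.toSimpleGraph.edgeSet + (S + 1) * (if c ∈ small then 1 else 0) := by
    intro c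
    have h₁ := c.connected_toSimpleGraph.card_vert_le_card_edgeSet_add_one
    by_cases hc : c ∈ small
    · rw [if_pos hc]
      nlinarith
    · rw [if_neg hc]
      by_cases ht : c.toSimpleGraph.IsTree
      · have : S < Nat.card c := by
          by_contra! hle
          exact hc (Finset.mem_filter.2 ⟨Finset.mem_univ _, ht, hle⟩)
        nlinarith
      · have : Nat.card c.toSimpleGraph.edgeSet + 1 ≠ Nat.card c := fun h =>
          ht (isTree_iff_connected_and_card.2 ⟨c.connected_toSimpleGraph, h⟩)
        have : Nat.card c ≤ Nat.card c.toSimpleGraph.edgeSet := by omega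
        nlinarith
  have hsum := Finset.sum_le_sum fun c (_ : c ∈ (Finset.univ : Finset G.ConnectedComponent)) =>
    hcomp c
  rw [Finset.sum_add_distrib, ← Finset.mul_sum, ← Finset.mul_sum, ← Finset.mul_sum,
    sum_card_components, sum_card_edgeSet_components, Finset.sum_boole, Finset.filter_mem_eq_inter,
    Finset.univ_inter, Fintype.card_fin] at hsum
  refine hsum.trans (Nat.add_le_add_left (Nat.mul_le_mul_left _ ?_) _)
  exact_mod_cast hsmall

end Counting

section Asymptotics

variable {nF : ℕ} {F : SimpleGraph (Fin nF)}

/-- A saturated graph in which a tree occurs often as a component: the tree is good and more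
copies of it can be added. -/
theorem SatSingle.frequent_tree {n t : ℕ} {G : SimpleGraph (Fin n)} (hG : SatSingle F G)
    {T : SimpleGraph (Fin t)} (hT : T.IsTree) (C : Fin (nF + 2) ↪ G.ConnectedComponent)
    (hC : ∀ i, Nonempty (T ≃g (C i).toSimpleGraph)) :
    GoodTree F t T ∧ satF (n + t) F ≤ Nat.card G.edgeSet + (t - 1) := by
  classical
  obtain ⟨e⟩ := nonempty_iso_unionCopies G T C fun i => (hC i).some
  have hU := hG.of_iso e.symm
  refine ⟨hU.goodTree hT le_rfl, ?_⟩
  have hcard := Fintype.card_congr e.toEquiv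
  have hedge := Nat.card_congr e.mapEdgeSet
  have hTe := (isTree_iff_connected_and_card.1 hT).2
  rw [card_edgeSet_unionCopies] at hedge
  rw [Nat.card_eq_fintype_card (α := Fin t), Fintype.card_fin] at hTe
  rw [Fintype.card_sum, Fintype.card_prod, Fintype.card_fin, Fintype.card_fin,
    Fintype.card_fin] at hcard
  refine (satF_le ?_ (hU.unionCopies_succ le_rfl)).trans ?_
  · rw [Fintype.card_sum, Fintype.card_prod, Fintype.card_fin, Fintype.card_fin]
    refine Eq.trans ?_ (congrArg (· + t) hcard)
    ring
  · rw [card_edgeSet_unionCopies, ← hedge, show t - 1 = Nat.card T.edgeSet by omega]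
    apply le_of_eq
    ring

theorem exists_satF_lower_bound (hF : 1 ≤ Nat.card F.edgeSet) {S : ℕ}
    (hno : ∀ s ≤ S, ∀ T : SimpleGraph (Fin s), ¬ GoodTree F s T) :
    ∃ M : ℕ, ∀ n, S * n ≤ (S + 1) * satF n F + M := by
  obtain ⟨M, hM⟩ := exists_edge_lower_bound S (nF + 2)
  refine ⟨M, fun n => ?_⟩
  obtain ⟨G, hG, hcard⟩ := exists_satF hF n
  rw [← hcard]
  exact hM n G fun s hs T hT ⟨C, hC⟩ => hno s hs T (hG.frequent_tree hT C hC).1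

theorem exists_satF_step (hF : 1 ≤ Nat.card F.edgeSet) {q : ℕ}
    (hno : ∀ s ≤ q, ∀ T : SimpleGraph (Fin s), ¬ GoodTree F s T) (D : ℕ) :
    ∃ N : ℕ, ∀ n ≥ N, (q + 1) * satF n F ≤ q * n + D →
      satF (n + (q + 1)) F ≤ satF n F + q := by
  obtain ⟨M, hM⟩ := exists_edge_lower_bound (q + 1) (nF + 2)
  refine ⟨(q + 2) * D + (q + 1) * M + 1, fun n hn hle => ?_⟩
  obtain ⟨G, hG, hcard⟩ := exists_satF hF n
  have hM' := hM n G
  by_cases hex : ∃ s ≤ q + 1, ∃ T : SimpleGraph (Fin s), T.IsTree ∧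
      ∃ C : Fin (nF + 2) ↪ G.ConnectedComponent, ∀ i, Nonempty (T ≃g (C i).toSimpleGraph)
  · obtain ⟨s, hs, T, hT, C, hC⟩ := hex
    obtain ⟨hgood, hsat⟩ := hG.frequent_tree hT C hC
    have : s = q + 1 := by
      by_contra hne
      exact hno s (by omega) T hgood
    subst this
    simpa [hcard] using hsat
  · push Not at hex
    have := hM' fun s hs T hT ⟨C, hC⟩ => by
      obtain ⟨i, hi⟩ := hex s hs T hT C
      exact hi.elim (hC i).some
    rw [hcard] at this
    exfalso
    nlinarith

theorem eventually_const_of_antitone_of_bddBelow {a : ℕ → ℤ} {m₀ : ℕ} {M : ℤ}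
    (hstep : ∀ m ≥ m₀, a (m + 1) ≤ a m) (hM : ∀ m, -M ≤ a m) :
    ∃ K m₁, ∀ m ≥ m₁, a m = K := by
  have hanti : Antitone fun m => a (m₀ + m) :=
    antitone_nat_of_succ_le fun m => hstep (m₀ + m) (by omega)
  let b : ℕ → ℕ := fun m => (a (m₀ + m) + M).toNat
  obtain ⟨m₁, hm₁⟩ : ∃ m₁, ∀ m, b m₁ ≤ b m :=
    ⟨Function.argmin b, fun m => Function.argmin_le b m⟩
  refine ⟨a (m₀ + m₁), m₀ + m₁, fun m hm => ?_⟩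
  obtain ⟨d, rfl⟩ := Nat.exists_eq_add_of_le hm
  have h₁ := hm₁ (m₁ + d)
  have h₂ := hanti (show m₁ ≤ m₁ + d by omega)
  have h₃ := hM (m₀ + m₁)
  have h₄ := hM (m₀ + (m₁ + d))
  simp only [b] at h₁ h₂
  rw [add_assoc]
  omega

theorem caseII_of_no_goodTree (hF : 1 ≤ Nat.card F.edgeSet)
    (hno : ∀ t, ∀ T : SimpleGraph (Fin t), ¬ GoodTree F t T) : CaseII F := by
  refine ⟨fun n => max 0 ((n : ℝ) - satF n F), ?_, fun n => ?_⟩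
  · rw [Metric.tendsto_atTop]
    intro ε hε
    obtain ⟨S, hS⟩ := exists_nat_one_div_lt (half_pos hε)
    obtain ⟨M, hM⟩ := exists_satF_lower_bound hF (S := S) fun s _ => hno s
    obtain ⟨N, hN⟩ := exists_nat_gt (M / (ε / 2))
    refine ⟨N + 1, fun n hn => ?_⟩
    have hn0 : (0 : ℝ) < n := by exact_mod_cast (show 0 < n by omega)
    have hMn : (M : ℝ) < ε / 2 * n := by
      have h₁ : (N : ℝ) ≤ n := by exact_mod_cast (show N ≤ n by omega)
      have := hN.trans_le h₁
      rwa [div_lt_iff₀ (half_pos hε), mul_comm] at this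
    have hM' : (S : ℝ) * n ≤ (S + 1) * satF n F + M := by exact_mod_cast hM n
    have hS' : 1 < ε / 2 * (S + 1) := by
      rwa [div_lt_iff₀ (by positivity)] at hS
    rw [Real.dist_eq, sub_zero, abs_of_nonneg (by positivity), div_lt_iff₀ hn0]
    refine max_lt (by positivity) ?_
    have hS0 : (0 : ℝ) ≤ S := by positivity
    have hM0 : (0 : ℝ) ≤ M := by positivity
    have key : ((S : ℝ) + 1) * (n - satF n F) < (S + 1) * (ε * n) := by
      nlinarith
    exact lt_of_mul_lt_mul_left key (by positivity)
  · have := le_max_right (0 : ℝ) ((n : ℝ) - satF n F)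
    linarith

theorem exists_goodTree_of_caseIWith (hF : 1 ≤ Nat.card F.edgeSet) {r : ℕ} (h : CaseIWith F r) :
    ∃ (t : ℕ) (T : SimpleGraph (Fin t)), GoodTree F t T := by
  by_contra! hno
  obtain ⟨hr, k, hk⟩ := h
  obtain ⟨M, hM⟩ := exists_satF_lower_bound hF (S := r) fun s _ => hno s
  obtain ⟨N, hN⟩ := eventually_atTop.1 (hk 0 (by omega))
  let n := r * (N + ((r + 1) * (k 0).natAbs + r * M) + 1)
  have hn : N + ((r + 1) * (k 0).natAbs + r * M) + 1 ≤ n := Nat.le_mul_of_pos_left _ hr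
  have h₁ := hN n (by omega) (Nat.mul_mod_right _ _)
  have h₂ : (r : ℤ) * n ≤ (r + 1) * satF n F + M := by exact_mod_cast hM n
  have h₃ : (N : ℤ) + ((r + 1) * |k 0| + r * M) + 1 ≤ n := by
    rw [Int.abs_eq_natAbs]
    exact_mod_cast hn
  have h₄ := le_abs_self (k 0)
  have h₅ : ((r : ℤ) + 1) * k 0 ≤ (r + 1) * |k 0| := mul_le_mul_of_nonneg_left h₄ (by positivity)
  have h₆ : (r : ℤ) * (r * n) ≤ r * ((r + 1) * satF n F + M) :=
    mul_le_mul_of_nonneg_left h₂ (by positivity)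
  have h₇ : (r : ℤ) * ((r + 1) * satF n F + M) = (r + 1) * (((r : ℤ) - 1) * n + k 0) + r * M := by
    rw [← h₁]; ring
  have h₈ : (0 : ℤ) ≤ N := by positivity
  nlinarith

theorem caseIWith_of_minimal (hF : 1 ≤ Nat.card F.edgeSet) {q : ℕ}
    (hno : ∀ s ≤ q, ∀ T : SimpleGraph (Fin s), ¬ GoodTree F s T)
    {T : SimpleGraph (Fin (q + 1))} (hT : T.IsTree)
    (hcon : ∀ c < q + 1, ∃ (J : Type) (_ : Fintype J) (H : SimpleGraph J) (k : ℕ),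
      nF + 2 ≤ k ∧ Fintype.card J % (q + 1) = c ∧ SatSingle F (unionCopies H k T)) :
    CaseIWith F (q + 1) := by
  have hclass : ∀ c, ∃ K : ℤ, c < q + 1 → ∀ᶠ n : ℕ in atTop, n % (q + 1) = c →
      (satF n F : ℤ) * ((q + 1 : ℕ) : ℤ) = (((q + 1 : ℕ) : ℤ) - 1) * n + K := by
    intro c
    by_cases hc : c < q + 1
    swap
    · exact ⟨0, fun h => absurd h hc⟩
    obtain ⟨J, _, H, k, hk, hJ, hsat⟩ := hcon c hc
    let n₀ := Fintype.card J + k * (q + 1)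
    have hn₀ : n₀ % (q + 1) = c := by simp [n₀, hJ]
    have hTe := (isTree_iff_connected_and_card.1 hT).2
    rw [Nat.card_eq_fintype_card (α := Fin (q + 1)), Fintype.card_fin] at hTe
    have hsat' : ∀ m, SatSingle F (unionCopies H (k + m) T) := by
      intro m
      induction m with
      | zero => exact hsat
      | succ m ih => exact ih.unionCopies_succ (hk.trans (Nat.le_add_right k m))
    have hup : ∀ m, satF (n₀ + m * (q + 1)) F ≤ Nat.card H.edgeSet + (k + m) * q := by
      intro m
      refine (satF_le ?_ (hsat' m)).trans ?_
      · simp [n₀]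
        ring
      · rw [card_edgeSet_unionCopies, show Nat.card T.edgeSet = q by omega]
    obtain ⟨M, hM⟩ := exists_satF_lower_bound hF hno
    obtain ⟨N, hN⟩ := exists_satF_step hF hno ((q + 1) * (Nat.card H.edgeSet + k * q))
    let a : ℕ → ℤ := fun m =>
      (satF (n₀ + m * (q + 1)) F : ℤ) * (q + 1) - q * ((n₀ + m * (q + 1) : ℕ) : ℤ)
    obtain ⟨K, m₁, hm₁⟩ := eventually_const_of_antitone_of_bddBelow (a := a) (m₀ := N) (M := M)
      (by
        intro m hm
        have h₁ := hN (n₀ + m * (q + 1)) (by nlinarith) (by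
          have := hup m
          nlinarith)
        have h₂ : n₀ + (m + 1) * (q + 1) = n₀ + m * (q + 1) + (q + 1) := by ring
        simp only [a, h₂]
        have h₃ : (satF (n₀ + m * (q + 1) + (q + 1)) F : ℤ) ≤ satF (n₀ + m * (q + 1)) F + q := by
          exact_mod_cast h₁
        push_cast
        nlinarith)
      (by
        intro m
        have h₁ : (q : ℤ) * ((n₀ + m * (q + 1) : ℕ) : ℤ) ≤
            (q + 1) * (satF (n₀ + m * (q + 1)) F : ℤ) + M := by
          exact_mod_cast hM (n₀ + m * (q + 1))
        simp only [a]
        linarith)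
    refine ⟨K, fun _ => eventually_atTop.2 ⟨n₀ + m₁ * (q + 1), fun n hn hnc => ?_⟩⟩
    obtain ⟨m, hm⟩ : ∃ m, n = n₀ + m * (q + 1) := by
      have hmod : n₀ ≡ n [MOD (q + 1)] := hn₀.trans hnc.symm
      have hle : n₀ ≤ n := by omega
      obtain ⟨m, hm⟩ := (Nat.modEq_iff_dvd' hle).1 hmod
      exact ⟨m, by rw [mul_comm m]; omega⟩
    have hmm : m₁ ≤ m := by
      by_contra! hlt
      have := Nat.mul_lt_mul_of_pos_right hlt (show 0 < q + 1 by omega)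
      omega
    have := hm₁ m hmm
    simp only [a, ← hm] at this
    push_cast
    linarith
  choose K hK using hclass
  exact ⟨by omega, K, hK⟩

end Asymptotics

section Host

variable {nF r k b : ℕ} {F : SimpleGraph (Fin nF)} {T : SimpleGraph (Fin r)} {Z : Type}
  {π : Z → Fin b}

/-- The vertices of `F` lying in components that are not contained in `T`. -/
def essential (F : SimpleGraph (Fin nF)) (T : SimpleGraph (Fin r)) : Set (Fin nF) :=
  {a | ¬ Contains T (SimpleGraph.induce (F.connectedComponentMk a).supp F)}

theorem essential_congr {a a' : Fin nF} (h : F.Reachable a a') :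
    a ∈ essential F T ↔ a' ∈ essential F T := by
  simp only [essential, Set.mem_ofPred_eq]
  rw [ConnectedComponent.sound h]

theorem essential_of_adj {a a' : Fin nF} (h : F.Adj a a') (ha : a ∈ essential F T) :
    a' ∈ essential F T :=
  (essential_congr h.reachable).1 ha

/-- To embed a component of `F` in `T` it suffices to embed an adjacency-closed set. -/
theorem contains_component_of_closed {V : Type*} {G : SimpleGraph V} (Q : Fin nF → Prop)
    (φ : Fin nF → V) (hQ : ∀ a a', F.Adj a a' → Q a → Q a')
    (hinj : ∀ a a', Q a → Q a' → φ a = φ a' → a = a')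
    (hadj : ∀ a a', Q a → Q a' → F.Adj a a' → G.Adj (φ a) (φ a')) {a : Fin nF} (ha : Q a) :
    Contains G (SimpleGraph.induce (F.connectedComponentMk a).supp F) := by
  have hmem : ∀ d : (F.connectedComponentMk a).supp, Q d := fun d =>
    mem_of_reachable_of_closed hQ (ConnectedComponent.exact d.2).symm ha
  exact .of_injective (fun d => φ d) (fun d d' h => Subtype.ext (hinj _ _ (hmem d) (hmem d') h))
    fun d e h => hadj _ _ (hmem d) (hmem e) h

/-- A clique on `Fin b` with pendant vertices `z : Z` attached to `π z`. -/
def cliqueWithPendants (π : Z → Fin b) : SimpleGraph (Fin b ⊕ Z) :=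
  SimpleGraph.fromRel fun x y =>
    match x, y with
    | Sum.inl _, Sum.inl _ => True
    | Sum.inl x, Sum.inr z => π z = x
    | _, _ => False

@[simp] theorem cliqueWithPendants_adj_inl_inl (x y : Fin b) :
    (cliqueWithPendants π).Adj (Sum.inl x) (Sum.inl y) ↔ x ≠ y := by
  simp [cliqueWithPendants]

@[simp] theorem cliqueWithPendants_adj_inl_inr (x : Fin b) (z : Z) :
    (cliqueWithPendants π).Adj (Sum.inl x) (Sum.inr z) ↔ π z = x := by
  simp [cliqueWithPendants]

@[simp] theorem cliqueWithPendants_adj_inr_inl (x : Fin b) (z : Z) :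
    (cliqueWithPendants π).Adj (Sum.inr z) (Sum.inl x) ↔ π z = x := by
  simp [cliqueWithPendants]

@[simp] theorem cliqueWithPendants_not_adj_inr_inr (z z' : Z) :
    ¬ (cliqueWithPendants π).Adj (Sum.inr z) (Sum.inr z') := by
  simp [cliqueWithPendants]

/-- If every missing edge not inside `J` creates `F`, then `H₀ ∪ kT` can be saturated by adding
edges inside `J` only. -/
theorem exists_satSingle_unionCopies {J : Type} [Finite J] (H₀ : SimpleGraph J)
    (hfree : ¬ Contains (unionCopies H₀ k T) F)
    (hout : ∀ (j : J) (q : Fin k × Fin r),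
      Contains (unionCopies H₀ k T ⊔ SimpleGraph.fromEdgeSet {s(Sum.inl j, Sum.inr q)}) F)
    (hcop : ∀ p q : Fin k × Fin r, p ≠ q → ¬ (unionCopies H₀ k T).Adj (Sum.inr p) (Sum.inr q) →
      Contains (unionCopies H₀ k T ⊔ SimpleGraph.fromEdgeSet {s(Sum.inr p, Sum.inr q)}) F) :
    ∃ H : SimpleGraph J, SatSingle F (unionCopies H k T) := by
  obtain ⟨H, hle, hH, hmax⟩ :=
    exists_maximal_graph (fun H : SimpleGraph J => ¬ Contains (unionCopies H k T) F) H₀ hfree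
  have hmono : unionCopies H₀ k T ≤ unionCopies H k T := by
    rintro (x | x) (y | y) hxy
    · simp only [unionCopies_adj_inl_inl] at hxy ⊢
      exact hle hxy
    · simp at hxy
    · simp at hxy
    · simpa using hxy
  have hmono' : ∀ x y, Contains (unionCopies H₀ k T ⊔ SimpleGraph.fromEdgeSet {s(x, y)}) F →
      Contains (unionCopies H k T ⊔ SimpleGraph.fromEdgeSet {s(x, y)}) F := fun x y h =>
    (contains_of_le (sup_le_sup_right hmono _)).trans h
  refine ⟨H, hH, ?_⟩
  rintro (x | x) (y | y) hxy hadj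
  · have h := not_not.1 (hmax _ (lt_sup_edge (G := H) (u := x) (v := y)
      (fun h => hxy (by rw [h])) (fun h => hadj (by simpa using h))))
    refine Contains.trans (contains_of_le ?_) h
    rintro (p | p) (q | q) hpq
    · simp only [unionCopies_adj_inl_inl, sup_fromEdgeSet_adj] at hpq ⊢
      simpa using hpq
    · simp at hpq
    · simp at hpq
    · rw [sup_fromEdgeSet_adj]
      exact Or.inl (by simpa using hpq)
  · exact hmono' _ _ (hout x y)
  · rw [Sym2.eq_swap]
    exact hmono' _ _ (hout y x)
  · refine hmono' _ _ (hcop x y (fun h => hxy (by rw [h])) ?_)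
    simpa using hadj

/-- An embedding of `F` sends essential vertices outside the copies of `T`. -/
theorem not_mem_copy_of_essential {J : Type*} {H : SimpleGraph J}
    (f : Fin nF ↪ J ⊕ Fin k × Fin r) (hf : ∀ a a', F.Adj a a' → (unionCopies H k T).Adj (f a) (f a'))
    {a : Fin nF} (ha : a ∈ essential F T) : ∃ j, f a = Sum.inl j := by
  rcases hfa : f a with j | ⟨i, t⟩
  · exact ⟨j, rfl⟩
  exfalso
  refine ha (contains_component_of_closed (Q := fun a => ∃ t, f a = Sum.inr (i, t))
    (fun a => (f a).elim (fun _ => t) fun p => p.2) ?_ ?_ ?_ ⟨t, hfa⟩)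
  · rintro p q hpq ⟨s, hs⟩
    have := hf p q hpq
    rcases hq : f q with z | ⟨j, z⟩
    · simp [hs, hq] at this
    · rw [hs, hq, unionCopies_adj_inr_inr] at this
      exact ⟨z, by rw [show i = j from this.1]⟩
  · rintro p q ⟨s, hs⟩ ⟨s', hs'⟩ h
    apply f.injective
    simp only [hs, hs', Sum.elim_inr] at h
    rw [hs, hs', h]
  · rintro p q ⟨s, hs⟩ ⟨s', hs'⟩ hpq
    have := hf p q hpq
    rw [hs, hs', unionCopies_adj_inr_inr] at this
    simpa [hs, hs'] using this.2

theorem not_contains_host (N : Finset (Fin nF)) (hN : ∀ a ∈ N, a ∈ essential F T)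
    (hN₂ : ∀ a ∈ N, IsEmpty Z ∨ ∃ x y, x ≠ y ∧ F.Adj a x ∧ F.Adj a y) (hb : b < N.card) :
    ¬ Contains (unionCopies (cliqueWithPendants π) k T) F := by
  rintro ⟨f, hf⟩
  have hcl : ∀ a : N, ∃ x : Fin b, f a = Sum.inl (Sum.inl x) := by
    rintro ⟨a, ha⟩
    obtain ⟨j, hj⟩ := not_mem_copy_of_essential f hf (hN a ha)
    rcases j with x | z
    · exact ⟨x, hj⟩
    rcases hN₂ a ha with hZ | ⟨x, y, hxy, hx, hy⟩
    · exact hZ.elim z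
    have key : ∀ w, F.Adj a w → f w = Sum.inl (Sum.inl (π z)) := by
      intro w hw
      obtain ⟨j', hj'⟩ := not_mem_copy_of_essential f hf (essential_of_adj hw (hN a ha))
      have := hf a w hw
      rw [hj, hj'] at this
      rcases j' with x | z'
      · simp only [unionCopies_adj_inl_inl, cliqueWithPendants_adj_inr_inl] at this
        rw [hj', this]
      · simp at this
    exact absurd (f.injective ((key x hx).trans (key y hy).symm)) hxy
  choose g hg using hcl
  have hinj : Function.Injective g := fun a a' h =>
    Subtype.ext (f.injective (by rw [hg, hg, h]))
  have := Fintype.card_le_of_injective g hinj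
  simp at this
  omega

end Host

section Extension

variable {nF r k b : ℕ} {F : SimpleGraph (Fin nF)} {T : SimpleGraph (Fin r)} {Z : Type}
  {π : Z → Fin b}

/-- There are `m` distinct values avoiding the image of a small set. -/
theorem exists_embedding_avoiding {V ι : Type*} {m : ℕ} (P : Finset ι) (h : ι → V)
    (hP : P.card ≤ m) {M : ℕ} (φ : Fin M ↪ V) (hM : 2 * m ≤ M) :
    ∃ ψ : Fin m ↪ Fin M, ∀ j, ∀ a ∈ P, h a ≠ φ (ψ j) := by
  classical
  let bad : Finset (Fin M) := Finset.univ.filter fun i => ∃ a ∈ P, h a = φ i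
  have hbad : bad.card ≤ P.card := by
    have hch : ∀ i : bad, ∃ a : P, h a = φ i := by
      rintro ⟨i, hi⟩
      obtain ⟨a, ha, hai⟩ := (Finset.mem_filter.1 hi).2
      exact ⟨⟨a, ha⟩, hai⟩
    choose g hg using hch
    have hinj : Function.Injective g := fun i i' hii =>
      Subtype.ext (φ.injective (by rw [← hg, ← hg, hii]))
    simpa using Fintype.card_le_of_injective g hinj
  have hcard : Fintype.card (Fin m) ≤ Fintype.card (badᶜ : Finset (Fin M)) := by
    have := bad.card_compl
    simp only [Fintype.card_fin, Fintype.card_coe] at this ⊢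
    omega
  obtain ⟨ψ⟩ := Function.Embedding.nonempty_of_card_le hcard
  refine ⟨ψ.trans (Function.Embedding.subtype _), fun j a ha hja => ?_⟩
  have := (ψ j).2
  rw [Finset.mem_compl] at this
  exact this (Finset.mem_filter.2 ⟨Finset.mem_univ _, a, ha, hja⟩)

/-- There are `m` distinct copies of `T` avoiding the image of a small set. -/
theorem exists_copies_avoiding {J β ι : Type*} {m : ℕ} (P : Finset ι) (h : ι → J ⊕ Fin k × β)
    (hP : P.card ≤ m) (hk : 2 * m ≤ k) :
    ∃ ψ : Fin m ↪ Fin k, ∀ j, ∀ a ∈ P, ∀ t, h a ≠ Sum.inr (ψ j, t) := by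
  obtain ⟨ψ, hψ⟩ := exists_embedding_avoiding P
    (fun a => (h a).elim (fun _ => none) fun p => some p.1) hP
    (⟨some, Option.some_injective _⟩ : Fin k ↪ Option (Fin k)) hk
  exact ⟨ψ, fun j a ha t hat => hψ j a ha (by simp [hat])⟩

/-- A partial embedding of the essential part of `F` extends to an embedding of `F`, provided that
its boundary lies in the clique and the clique has room for the rest of the core `N`. -/
theorem contains_of_partial (hk : 2 * nF ≤ k) (N : Finset (Fin nF))
    (hN : ∀ a ∈ N, a ∈ essential F T)
    (hleaf : ∀ a ∈ essential F T, a ∉ N → ∃ m ∈ N, F.Adj a m ∧ ∀ a', F.Adj a a' → a' = m)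
    (hpend : (∃ a ∈ essential F T, a ∉ N) →
      ∀ x, ∃ φ : Fin (2 * nF) ↪ Z, ∀ i, π (φ i) = x)
    {G : SimpleGraph ((Fin b ⊕ Z) ⊕ Fin k × Fin r)}
    (hG : unionCopies (cliqueWithPendants π) k T ≤ G)
    (P : Finset (Fin nF)) (hP : ∀ a ∈ P, a ∈ essential F T)
    (h : Fin nF → (Fin b ⊕ Z) ⊕ Fin k × Fin r)
    (hinj : ∀ a ∈ P, ∀ a' ∈ P, h a = h a' → a = a')
    (hadj : ∀ a ∈ P, ∀ a' ∈ P, F.Adj a a' → G.Adj (h a) (h a'))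
    (hbd : ∀ a ∈ P, ∀ a', a' ∉ P → F.Adj a a' → ∃ x, h a = Sum.inl (Sum.inl x))
    (hcount : ∃ U : Finset (Fin b), (∀ a ∈ P, ∀ x, h a = Sum.inl (Sum.inl x) → x ∈ U) ∧
      U.card + N.card ≤ b + (N ∩ P).card) :
    Contains G F := by
  classical
  obtain ⟨U, hU, hcount⟩ := hcount
  have hPcard : P.card ≤ nF := by simpa using P.card_le_univ
  -- the remaining core vertices
  have hψ : ∃ ψ : Fin nF → (Fin b ⊕ Z) ⊕ Fin k × Fin r,
      (∀ a ∈ N, a ∉ P → ∃ x, ψ a = Sum.inl (Sum.inl x) ∧ x ∉ U) ∧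
      ∀ a ∈ N, a ∉ P → ∀ a' ∈ N, a' ∉ P → ψ a = ψ a' → a = a' := by
    have hc : Fintype.card (N \ P : Finset (Fin nF)) ≤ Fintype.card (Uᶜ : Finset (Fin b)) := by
      have h₁ := U.card_compl
      have h₂ := Finset.card_sdiff_add_card_inter N P
      simp only [Fintype.card_fin, Fintype.card_coe] at h₁ ⊢
      omega
    obtain ⟨e⟩ := Function.Embedding.nonempty_of_card_le hc
    refine ⟨fun a => if ha : a ∈ N \ P then Sum.inl (Sum.inl (e ⟨a, ha⟩)) else h a, ?_, ?_⟩
    · intro a haN haP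
      have ha : a ∈ N \ P := Finset.mem_sdiff.2 ⟨haN, haP⟩
      exact ⟨e ⟨a, ha⟩, dif_pos ha, Finset.mem_compl.1 (e ⟨a, ha⟩).2⟩
    · intro a haN haP a' haN' haP' haa
      have ha : a ∈ N \ P := Finset.mem_sdiff.2 ⟨haN, haP⟩
      have ha' : a' ∈ N \ P := Finset.mem_sdiff.2 ⟨haN', haP'⟩
      simp only [dif_pos ha, dif_pos ha', Sum.inl.injEq] at haa
      simpa using e.injective (Subtype.ext haa)
  obtain ⟨ψ, hψU, hψinj⟩ := hψ
  -- positions of the core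
  let f₁ : Fin nF → (Fin b ⊕ Z) ⊕ Fin k × Fin r := fun a => if a ∈ P then h a else ψ a
  have hf₁ : ∀ a a', (a ∈ P ∨ a ∈ N) → F.Adj a a' → (a ∉ P ∨ a' ∉ P) →
      ∃ x, f₁ a = Sum.inl (Sum.inl x) := by
    intro a a' ha haa hnot
    by_cases haP : a ∈ P
    · simp only [f₁, if_pos haP]
      exact hbd a haP a' (hnot.resolve_left (not_not.2 haP)) haa
    · simp only [f₁, if_neg haP]
      obtain ⟨x, hx, -⟩ := hψU a (ha.resolve_left haP) haP
      exact ⟨x, hx⟩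
  -- pendant vertices
  have hφ : ∀ x, ∃ φ : Fin nF → (Fin b ⊕ Z) ⊕ Fin k × Fin r, (∃ a ∈ essential F T, a ∉ N) →
      Function.Injective φ ∧ ∀ i, (∃ z, φ i = Sum.inl (Sum.inr z) ∧ π z = x) ∧
        ∀ c ∈ P, h c ≠ φ i := by
    intro x
    by_cases hex : ∃ a ∈ essential F T, a ∉ N
    swap
    · exact ⟨h, fun h' => absurd h' hex⟩
    obtain ⟨φ, hφ⟩ := hpend hex x
    let φ' := φ.trans ⟨fun z => (Sum.inl (Sum.inr z) : (Fin b ⊕ Z) ⊕ Fin k × Fin r),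
        fun z z' hzz => by simpa using hzz⟩
    obtain ⟨ψ', hψ'⟩ := exists_embedding_avoiding P h hPcard φ' le_rfl
    exact ⟨ψ'.trans φ', fun _ => ⟨(ψ'.trans φ').injective,
      fun i => ⟨⟨φ (ψ' i), rfl, hφ _⟩, fun c hc => hψ' i c hc⟩⟩⟩
  choose φ hφ using hφ
  have hpendant : ∀ a, ∃ v : (Fin b ⊕ Z) ⊕ Fin k × Fin r, a ∈ essential F T → a ∉ P → a ∉ N →
      ∃ (m : Fin nF) (x : Fin b) (z : Z), m ∈ N ∧ (∀ a', F.Adj a a' → a' = m) ∧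
        f₁ m = Sum.inl (Sum.inl x) ∧ v = φ x a ∧ v = Sum.inl (Sum.inr z) ∧ π z = x ∧
        ∀ c ∈ P, h c ≠ v := by
    intro a
    by_cases ha : a ∈ essential F T ∧ a ∉ P ∧ a ∉ N
    swap
    · exact ⟨h a, fun h₁ h₂ h₃ => absurd ⟨h₁, h₂, h₃⟩ ha⟩
    obtain ⟨haW, haP, haN⟩ := ha
    obtain ⟨m, hmN, ham, hm⟩ := hleaf a haW haN
    obtain ⟨x, hx⟩ := hf₁ m a (Or.inr hmN) ham.symm (Or.inr haP)
    obtain ⟨⟨z, hz, hzx⟩, hav⟩ := (hφ x ⟨a, haW, haN⟩).2 a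
    exact ⟨φ x a, fun _ _ _ => ⟨m, x, z, hmN, hm, hx, rfl, hz, hzx, hav⟩⟩
  choose v hv using hpendant
  -- components contained in `T`
  obtain ⟨ι, hι⟩ := exists_copies_avoiding P h hPcard hk
  have hcopy : ∀ c : F.ConnectedComponent, ∃ w : Fin nF → (Fin b ⊕ Z) ⊕ Fin k × Fin r,
      ∀ a, F.connectedComponentMk a = c → a ∉ essential F T →
        (∃ t, w a = Sum.inr (ι c.out, t)) ∧
        ∀ a', F.connectedComponentMk a' = c →
          (w a = w a' → a = a') ∧
          (F.Adj a a' → (unionCopies (cliqueWithPendants π) k T).Adj (w a) (w a')) := by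
    intro c
    by_cases hc : Contains T (SimpleGraph.induce c.supp F)
    · obtain ⟨g, hg⟩ := hc
      refine ⟨fun a => if ha : a ∈ c.supp then Sum.inr (ι c.out, g ⟨a, ha⟩) else h a,
        fun a ha _ => ⟨⟨g ⟨a, ha⟩, dif_pos ha⟩, fun a' ha' => ⟨fun h' => ?_, fun h' => ?_⟩⟩⟩
      · have h₁ : a ∈ c.supp := ha
        have h₂ : a' ∈ c.supp := ha'
        simp only [dif_pos h₁, dif_pos h₂, Sum.inr.injEq, Prod.mk.injEq, true_and] at h'
        simpa using g.injective h'
      · have h₁ : a ∈ c.supp := ha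
        have h₂ : a' ∈ c.supp := ha'
        simp only [dif_pos h₁, dif_pos h₂, unionCopies_adj_inr_inr, true_and]
        exact hg _ _ h'
    · refine ⟨h, fun a ha hna => absurd ?_ hna⟩
      subst ha
      exact hc
  choose w hw using hcopy
  let f : Fin nF → (Fin b ⊕ Z) ⊕ Fin k × Fin r := fun a =>
    if a ∈ P ∨ a ∈ N then f₁ a
    else if a ∈ essential F T then v a else w (F.connectedComponentMk a) a
  have hfP : ∀ a ∈ P, f a = h a := fun a ha => by simp [f, f₁, ha]
  have hfN : ∀ a ∈ N, a ∉ P → f a = ψ a := fun a ha ha' => by simp [f, f₁, ha, ha']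
  have hfv : ∀ a ∈ essential F T, a ∉ P → a ∉ N → f a = v a := fun a h₁ h₂ h₃ => by
    simp [f, h₁, h₂, h₃]
  have hfw : ∀ a ∉ essential F T, f a = w (F.connectedComponentMk a) a := fun a h₁ => by
    have h₂ : a ∉ P := fun h => h₁ (hP a h)
    have h₃ : a ∉ N := fun h => h₁ (hN a h)
    simp [f, h₁, h₂, h₃]
  have hff₁ : ∀ a, a ∈ P ∨ a ∈ N → f a = f₁ a := fun a h => by simp only [f, if_pos h]
  have hPother : ∀ a ∈ P, ∀ a' ∉ P, f a ≠ f a' := by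
    intro a ha a' ha' heq
    rw [hfP a ha] at heq
    by_cases hN' : a' ∈ N
    · obtain ⟨x, hx, hxU⟩ := hψU a' hN' ha'
      rw [hfN a' hN' ha', hx] at heq
      exact hxU (hU a ha x heq)
    · by_cases hW : a' ∈ essential F T
      · obtain ⟨m, x, z, -, -, -, -, -, -, hne⟩ := hv a' hW ha' hN'
        rw [hfv a' hW ha' hN'] at heq
        exact hne a ha heq
      · obtain ⟨⟨t, ht⟩, -⟩ := hw _ a' rfl hW
        rw [hfw a' hW, ht] at heq
        exact hι _ a ha t heq
  have hfinj : Function.Injective f := by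
    intro a a' heq
    by_cases ha : a ∈ P <;> by_cases ha' : a' ∈ P
    · rw [hfP a ha, hfP a' ha'] at heq
      exact hinj a ha a' ha' heq
    · exact absurd heq (hPother a ha a' ha')
    · exact absurd heq.symm (hPother a' ha' a ha)
    by_cases hW : a ∈ essential F T <;> by_cases hW' : a' ∈ essential F T
    · by_cases hN₁ : a ∈ N <;> by_cases hN₂ : a' ∈ N
      · rw [hfN a hN₁ ha, hfN a' hN₂ ha'] at heq
        exact hψinj a hN₁ ha a' hN₂ ha' heq
      · obtain ⟨x, hx, -⟩ := hψU a hN₁ ha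
        obtain ⟨_, _, z, -, -, -, -, hz, -, -⟩ := hv a' hW' ha' hN₂
        rw [hfN a hN₁ ha, hfv a' hW' ha' hN₂, hx, hz] at heq
        simp at heq
      · obtain ⟨x, hx, -⟩ := hψU a' hN₂ ha'
        obtain ⟨_, _, z, -, -, -, -, hz, -, -⟩ := hv a hW ha hN₁
        rw [hfN a' hN₂ ha', hfv a hW ha hN₁, hx, hz] at heq
        simp at heq
      · obtain ⟨_, x, z, -, -, -, hvx, hz, hzx, -⟩ := hv a hW ha hN₁
        obtain ⟨_, x', z', -, -, -, hvx', hz', hzx', -⟩ := hv a' hW' ha' hN₂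
        rw [hfv a hW ha hN₁, hfv a' hW' ha' hN₂] at heq
        have hzz : z = z' := by
          have := hz.symm.trans (heq.trans hz')
          simpa using this
        have hxx : x = x' := by rw [← hzx, ← hzx', hzz]
        subst hxx
        exact (hφ x ⟨a, hW, hN₁⟩).1 (hvx.symm.trans (heq.trans hvx'))
    · exfalso
      obtain ⟨⟨t, ht⟩, -⟩ := hw _ a' rfl hW'
      rw [hfw a' hW', ht] at heq
      by_cases hN₁ : a ∈ N
      · obtain ⟨x, hx, -⟩ := hψU a hN₁ ha
        rw [hfN a hN₁ ha, hx] at heq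
        simp at heq
      · obtain ⟨_, _, z, -, -, -, -, hz, -, -⟩ := hv a hW ha hN₁
        rw [hfv a hW ha hN₁, hz] at heq
        simp at heq
    · exfalso
      obtain ⟨⟨t, ht⟩, -⟩ := hw _ a rfl hW
      rw [hfw a hW, ht] at heq
      by_cases hN₁ : a' ∈ N
      · obtain ⟨x, hx, -⟩ := hψU a' hN₁ ha'
        rw [hfN a' hN₁ ha', hx] at heq
        simp at heq
      · obtain ⟨_, _, z, -, -, -, -, hz, -, -⟩ := hv a' hW' ha' hN₁
        rw [hfv a' hW' ha' hN₁, hz] at heq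
        simp at heq
    · obtain ⟨⟨t, ht⟩, hinjw⟩ := hw _ a rfl hW
      obtain ⟨⟨t', ht'⟩, -⟩ := hw _ a' rfl hW'
      rw [hfw a hW, hfw a' hW'] at heq
      have hcc : F.connectedComponentMk a = F.connectedComponentMk a' := by
        have := ht.symm.trans (heq.trans ht')
        simp only [Sum.inr.injEq, Prod.mk.injEq, EmbeddingLike.apply_eq_iff_eq] at this
        rw [← (F.connectedComponentMk a).out_eq, ← (F.connectedComponentMk a').out_eq, this.1]
      exact (hinjw a' hcc.symm).1 (by rw [heq, hcc])
  have hleafadj : ∀ a a', a ∈ essential F T → a ∉ P → a ∉ N → F.Adj a a' →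
      G.Adj (f a) (f a') := by
    intro a a' hW haP haN haa
    obtain ⟨m, x, z, hmN, hm, hfm, -, hz, hzx, -⟩ := hv a hW haP haN
    obtain rfl := hm a' haa
    rw [hff₁ a' (Or.inr hmN), hfv a hW haP haN, hfm, hz]
    apply hG
    simp [hzx]
  refine .of_injective f hfinj fun a a' haa => ?_
  by_cases hW : a ∈ essential F T
  · have hW' := essential_of_adj haa hW
    by_cases hc : a ∈ P ∨ a ∈ N
    swap
    · exact hleafadj a a' hW (fun h => hc (Or.inl h)) (fun h => hc (Or.inr h)) haa
    by_cases hc' : a' ∈ P ∨ a' ∈ N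
    swap
    · exact (hleafadj a' a hW' (fun h => hc' (Or.inl h)) (fun h => hc' (Or.inr h)) haa.symm).symm
    by_cases hPP : a ∈ P ∧ a' ∈ P
    · rw [hfP a hPP.1, hfP a' hPP.2]
      exact hadj a hPP.1 a' hPP.2 haa
    · obtain ⟨x, hx⟩ := hf₁ a a' hc haa (by tauto)
      obtain ⟨x', hx'⟩ := hf₁ a' a hc' haa.symm (by tauto)
      have hne := hfinj.ne haa.ne
      rw [hff₁ a hc, hff₁ a' hc', hx, hx'] at hne ⊢
      apply hG
      simpa using hne
  · have hW' : a' ∉ essential F T := fun h => hW (essential_of_adj haa.symm h)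
    have hcc : F.connectedComponentMk a' = F.connectedComponentMk a :=
      ConnectedComponent.sound haa.symm.reachable
    have h₁ := ((hw _ a rfl hW).2 a' hcc).2 haa
    rw [hfw a hW, hfw a' hW', hcc]
    exact hG h₁

end Extension

section Join

variable {nF r k b : ℕ} {F : SimpleGraph (Fin nF)} {T : SimpleGraph (Fin r)} {Z : Type}
  {π : Z → Fin b}

/-- `A ∪ B` is a component of `F` not contained in `T`, embedded by `pos` into two copies of `T`
joined by an edge from `ℓ` to `u`; this edge is used by the edge `sy` of `F`. -/
structure IsJoin (F : SimpleGraph (Fin nF)) (T : SimpleGraph (Fin r)) (ℓ u : Fin r)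
    (A B : Finset (Fin nF)) (pos : Fin nF → Fin r) (s y : Fin nF) : Prop where
  disj : ∀ a ∈ A, a ∉ B
  essential_left : ∀ a ∈ A, a ∈ essential F T
  essential_right : ∀ a ∈ B, a ∈ essential F T
  closed_left : ∀ a ∈ A, ∀ a', F.Adj a a' → a' ∈ A ∨ (a = s ∧ a' = y)
  closed_right : ∀ a ∈ B, ∀ a', F.Adj a a' → a' ∈ B ∨ (a = y ∧ a' = s)
  mem_left : s ∈ A
  mem_right : y ∈ B
  adj : F.Adj s y
  pos_left : pos s = ℓ
  pos_right : pos y = u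
  inj_left : ∀ a ∈ A, ∀ a' ∈ A, pos a = pos a' → a = a'
  inj_right : ∀ a ∈ B, ∀ a' ∈ B, pos a = pos a' → a = a'
  adj_left : ∀ a ∈ A, ∀ a' ∈ A, F.Adj a a' → T.Adj (pos a) (pos a')
  adj_right : ∀ a ∈ B, ∀ a' ∈ B, F.Adj a a' → T.Adj (pos a) (pos a')
  reach_left : ∀ a ∈ A, F.Reachable s a
  reach_right : ∀ a ∈ B, F.Reachable s a

theorem IsJoin.symm {ℓ u : Fin r} {A B : Finset (Fin nF)} {pos : Fin nF → Fin r} {s y : Fin nF}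
    (h : IsJoin F T ℓ u A B pos s y) : IsJoin F T u ℓ B A pos y s where
  disj := fun a ha hb => h.disj a hb ha
  essential_left := h.essential_right
  essential_right := h.essential_left
  closed_left := h.closed_right
  closed_right := h.closed_left
  mem_left := h.mem_right
  mem_right := h.mem_left
  adj := h.adj.symm
  pos_left := h.pos_right
  pos_right := h.pos_left
  inj_left := h.inj_right
  inj_right := h.inj_left
  adj_left := h.adj_right
  adj_right := h.adj_left
  reach_left := fun a ha => h.adj.symm.reachable.trans (h.reach_right a ha)
  reach_right := fun a ha => h.adj.symm.reachable.trans (h.reach_left a ha)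

theorem exists_isJoin (hT : GoodTree F r T) (ℓ u : Fin r) :
    ∃ A B pos s y, IsJoin F T ℓ u A B pos s y := by
  classical
  obtain ⟨c, hc, f, hf⟩ := hT.2.2 ℓ u
  let g : Fin nF → Fin r ⊕ Fin r := fun a => if h : a ∈ c.supp then f ⟨a, h⟩ else Sum.inl ℓ
  have hgf : ∀ a (h : a ∈ c.supp), g a = f ⟨a, h⟩ := fun a h => by simp only [g]; rw [dif_pos h]
  have ginj : ∀ a ∈ c.supp, ∀ a' ∈ c.supp, g a = g a' → a = a' := by
    intro a ha a' ha' h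
    rw [hgf a ha, hgf a' ha'] at h
    simpa using f.injective h
  have gadj : ∀ a ∈ c.supp, ∀ a' ∈ c.supp, F.Adj a a' → (disjUnionG T T).Adj (g a) (g a') ∨
      (g a = Sum.inl ℓ ∧ g a' = Sum.inr u) ∨ (g a = Sum.inr u ∧ g a' = Sum.inl ℓ) := by
    intro a ha a' ha' h
    have := hf ⟨a, ha⟩ ⟨a', ha'⟩ h
    rw [sup_fromEdgeSet_adj, ← hgf, ← hgf] at this
    tauto
  have hclosed : ∀ a ∈ c.supp, ∀ a', F.Adj a a' → a' ∈ c.supp := fun a ha a' h =>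
    (ConnectedComponent.sound h.symm.reachable).trans ha
  have hess : ∀ a ∈ c.supp, a ∈ essential F T := by
    intro a ha
    rw [← show F.connectedComponentMk a = c from ha] at hc
    exact hc
  have hreach : ∀ a ∈ c.supp, ∀ a' ∈ c.supp, F.Reachable a a' := fun a ha a' ha' =>
    ConnectedComponent.exact (Eq.trans ha (Eq.symm ha'))
  have hcross : ∃ s ∈ c.supp, ∃ y ∈ c.supp, F.Adj s y ∧ g s = Sum.inl ℓ ∧ g y = Sum.inr u := by
    by_contra! hno
    have gadj' : ∀ a ∈ c.supp, ∀ a' ∈ c.supp, F.Adj a a' → (disjUnionG T T).Adj (g a) (g a') := by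
      intro a ha a' ha' h
      rcases gadj a ha a' ha' h with h' | h' | h'
      · exact h'
      · exact absurd h'.2 (hno a ha a' ha' h h'.1)
      · exact absurd h'.1 (hno a' ha' a ha h.symm h'.2)
    obtain ⟨a₀, ha₀⟩ := c.nonempty_supp
    apply hess a₀ ha₀
    rcases h₀ : g a₀ with t | t
    · refine contains_component_of_closed (fun a => a ∈ c.supp ∧ ∃ t, g a = Sum.inl t)
        (fun a => (g a).elim id id) ?_ ?_ ?_ ⟨ha₀, t, h₀⟩
      · rintro a a' h ⟨ha, t, ht⟩
        have hh := gadj' a ha a' (hclosed a ha a' h) h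
        refine ⟨hclosed a ha a' h, ?_⟩
        rcases h' : g a' with t' | t'
        · exact ⟨t', rfl⟩
        · simp [ht, h'] at hh
      · rintro a a' ⟨ha, t, ht⟩ ⟨ha', t', ht'⟩ h
        refine ginj a ha a' ha' ?_
        simp [ht, ht'] at h ⊢
        exact h
      · rintro a a' ⟨ha, t, ht⟩ ⟨ha', t', ht'⟩ h
        have := gadj' a ha a' ha' h
        simpa [ht, ht'] using this
    · refine contains_component_of_closed (fun a => a ∈ c.supp ∧ ∃ t, g a = Sum.inr t)
        (fun a => (g a).elim id id) ?_ ?_ ?_ ⟨ha₀, t, h₀⟩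
      · rintro a a' h ⟨ha, t, ht⟩
        have hh := gadj' a ha a' (hclosed a ha a' h) h
        refine ⟨hclosed a ha a' h, ?_⟩
        rcases h' : g a' with t' | t'
        · simp [ht, h'] at hh
        · exact ⟨t', rfl⟩
      · rintro a a' ⟨ha, t, ht⟩ ⟨ha', t', ht'⟩ h
        refine ginj a ha a' ha' ?_
        simp [ht, ht'] at h ⊢
        exact h
      · rintro a a' ⟨ha, t, ht⟩ ⟨ha', t', ht'⟩ h
        have := gadj' a ha a' ha' h
        simpa [ht, ht'] using this
  obtain ⟨s, hs, y, hy, hsy, gs, gy⟩ := hcross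
  have memA : ∀ a, a ∈ Finset.univ.filter (fun a => a ∈ c.supp ∧ ∃ t, g a = Sum.inl t) ↔
      a ∈ c.supp ∧ ∃ t, g a = Sum.inl t := by simp
  have memB : ∀ a, a ∈ Finset.univ.filter (fun a => a ∈ c.supp ∧ ∃ t, g a = Sum.inr t) ↔
      a ∈ c.supp ∧ ∃ t, g a = Sum.inr t := by simp
  refine ⟨Finset.univ.filter (fun a => a ∈ c.supp ∧ ∃ t, g a = Sum.inl t),
    Finset.univ.filter (fun a => a ∈ c.supp ∧ ∃ t, g a = Sum.inr t),
    fun a => (g a).elim id id, s, y, ?_⟩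
  constructor
  · intro a ha hb
    rw [memA] at ha
    rw [memB] at hb
    obtain ⟨_, t, ht⟩ := ha
    obtain ⟨_, t', ht'⟩ := hb
    simp [ht] at ht'
  · exact fun a ha => hess a ((memA a).1 ha).1
  · exact fun a ha => hess a ((memB a).1 ha).1
  · intro a ha a' h
    rw [memA] at ha ⊢
    obtain ⟨ha, t, ht⟩ := ha
    have ha' := hclosed a ha a' h
    rcases h' : g a' with t' | t'
    · exact Or.inl ⟨ha', t', rfl⟩
    · right
      rcases gadj a ha a' ha' h with h'' | h'' | h''
      · simp [ht, h'] at h''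
      · exact ⟨ginj a ha s hs (h''.1.trans gs.symm), ginj a' ha' y hy (h''.2.trans gy.symm)⟩
      · simp [ht] at h''
  · intro a ha a' h
    rw [memB] at ha ⊢
    obtain ⟨ha, t, ht⟩ := ha
    have ha' := hclosed a ha a' h
    rcases h' : g a' with t' | t'
    · right
      rcases gadj a ha a' ha' h with h'' | h'' | h''
      · simp [ht, h'] at h''
      · simp [ht] at h''
      · exact ⟨ginj a ha y hy (h''.1.trans gy.symm), ginj a' ha' s hs (h''.2.trans gs.symm)⟩
    · exact Or.inl ⟨ha', t', rfl⟩
  · exact (memA s).2 ⟨hs, ℓ, gs⟩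
  · exact (memB y).2 ⟨hy, u, gy⟩
  · exact hsy
  · simp [gs]
  · simp [gy]
  · intro a ha a' ha' h
    obtain ⟨ha, t, ht⟩ := (memA a).1 ha
    obtain ⟨ha', t', ht'⟩ := (memA a').1 ha'
    refine ginj a ha a' ha' ?_
    simp [ht, ht'] at h ⊢
    exact h
  · intro a ha a' ha' h
    obtain ⟨ha, t, ht⟩ := (memB a).1 ha
    obtain ⟨ha', t', ht'⟩ := (memB a').1 ha'
    refine ginj a ha a' ha' ?_
    simp [ht, ht'] at h ⊢
    exact h
  · intro a ha a' ha' h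
    obtain ⟨ha, t, ht⟩ := (memA a).1 ha
    obtain ⟨ha', t', ht'⟩ := (memA a').1 ha'
    have := gadj a ha a' ha' h
    simpa [ht, ht'] using this
  · intro a ha a' ha' h
    obtain ⟨ha, t, ht⟩ := (memB a).1 ha
    obtain ⟨ha', t', ht'⟩ := (memB a').1 ha'
    have := gadj a ha a' ha' h
    simpa [ht, ht'] using this
  · exact fun a ha => hreach s hs a ((memA a).1 ha).1
  · exact fun a ha => hreach s hs a ((memB a).1 ha).1

/-- Partial embeddings of the essential part of `F` into supergraphs of the host graph, with
boundary in the clique and covering `d` more core vertices than clique vertices, extend to `F`. -/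
def PartialExtends (F : SimpleGraph (Fin nF)) (T : SimpleGraph (Fin r)) (π : Z → Fin b) (k : ℕ)
    (N : Finset (Fin nF)) (d : ℕ) : Prop :=
  ∀ (G : SimpleGraph ((Fin b ⊕ Z) ⊕ Fin k × Fin r)),
    unionCopies (cliqueWithPendants π) k T ≤ G →
    ∀ (P : Finset (Fin nF)), (∀ a ∈ P, a ∈ essential F T) →
    ∀ (h : Fin nF → (Fin b ⊕ Z) ⊕ Fin k × Fin r),
    (∀ a ∈ P, ∀ a' ∈ P, h a = h a' → a = a') →
    (∀ a ∈ P, ∀ a' ∈ P, F.Adj a a' → G.Adj (h a) (h a')) →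
    (∀ a ∈ P, ∀ a', a' ∉ P → F.Adj a a' → ∃ x, h a = Sum.inl (Sum.inl x)) →
    (∃ U : Finset (Fin b), (∀ a ∈ P, ∀ x, h a = Sum.inl (Sum.inl x) → x ∈ U) ∧
      U.card + d ≤ (N ∩ P).card) →
    Contains G F

variable {N : Finset (Fin nF)} {d : ℕ}

/-- Joining two different copies of `T` creates `F`. -/
theorem PartialExtends.contains_copies (hext : PartialExtends F T π k N d) {u v : Fin r}
    {A B : Finset (Fin nF)} {pos : Fin nF → Fin r} {s y : Fin nF}
    (hJ : IsJoin F T u v A B pos s y) (hd : d ≤ (N ∩ (A ∪ B)).card) {i j : Fin k} (hij : i ≠ j) :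
    Contains (unionCopies (cliqueWithPendants π) k T ⊔
      SimpleGraph.fromEdgeSet {s(Sum.inr (i, u), Sum.inr (j, v))}) F := by
  classical
  have hB : ∀ a ∈ B, a ∉ A := fun a hb ha => hJ.disj a ha hb
  refine hext _ le_sup_left (A ∪ B) ?_
    (fun a => Sum.inr (if a ∈ A then (i, pos a) else (j, pos a))) ?_ ?_ ?_ ⟨∅, ?_, ?_⟩
  · intro a ha
    rcases Finset.mem_union.1 ha with ha | ha
    exacts [hJ.essential_left a ha, hJ.essential_right a ha]
  · intro a ha a' ha' h
    rcases Finset.mem_union.1 ha with ha | ha <;> rcases Finset.mem_union.1 ha' with ha' | ha'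
    · simp only [ha, ha', if_true, Sum.inr.injEq, Prod.mk.injEq, true_and] at h
      exact hJ.inj_left a ha a' ha' h
    · simp [ha, hB a' ha', hij] at h
    · simp [ha', hB a ha, hij.symm] at h
    · simp only [hB a ha, hB a' ha', if_false, Sum.inr.injEq, Prod.mk.injEq, true_and] at h
      exact hJ.inj_right a ha a' ha' h
  · intro a ha a' ha' h
    rw [sup_fromEdgeSet_adj, unionCopies_adj_inr_inr]
    rcases Finset.mem_union.1 ha with ha | ha
    · rcases hJ.closed_left a ha a' h with ha' | ⟨rfl, rfl⟩
      · left
        simpa [ha, ha'] using hJ.adj_left a ha a' ha' h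
      · right
        simp [ha, hB _ hJ.mem_right, hJ.pos_left, hJ.pos_right, hij]
    · rcases hJ.closed_right a ha a' h with ha' | ⟨rfl, rfl⟩
      · left
        simpa [hB a ha, hB a' ha'] using hJ.adj_right a ha a' ha' h
      · right
        simp [hB a ha, hJ.mem_left, hJ.pos_left, hJ.pos_right, hij.symm]
  · intro a ha a' ha' h
    exfalso
    apply ha'
    rw [Finset.mem_union] at ha ⊢
    rcases ha with ha | ha
    · rcases hJ.closed_left a ha a' h with h' | ⟨rfl, rfl⟩
      exacts [Or.inl h', Or.inr hJ.mem_right]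
    · rcases hJ.closed_right a ha a' h with h' | ⟨rfl, rfl⟩
      exacts [Or.inr h', Or.inl hJ.mem_left]
  · intro a _ x h
    simp at h
  · simpa using hd

/-- Adding an edge inside a copy of `T` creates `F`. -/
theorem PartialExtends.contains_copy (hext : PartialExtends F T π k N 1) (hT : GoodTree F r T)
    (hN : ∀ a ∈ essential F T, ∃ n ∈ N, F.Reachable n a)
    {u v : Fin r} (huv : u ≠ v) (hadj : ¬ T.Adj u v) (i : Fin k) :
    Contains (unionCopies (cliqueWithPendants π) k T ⊔
      SimpleGraph.fromEdgeSet {s(Sum.inr (i, u), Sum.inr (i, v))}) F := by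
  classical
  obtain ⟨c, hc, f, hf⟩ := hT.2.1 u v huv hadj
  have hess : ∀ a ∈ c.supp, a ∈ essential F T := by
    intro a ha
    rw [← show F.connectedComponentMk a = c from ha] at hc
    exact hc
  have hgf : ∀ a (h : a ∈ c.supp), (fun a => if h : a ∈ c.supp then f ⟨a, h⟩ else u) a = f ⟨a, h⟩ :=
    fun a h => dif_pos h
  generalize (fun a => if h : a ∈ c.supp then f ⟨a, h⟩ else u) = g at hgf
  have memP : ∀ a, a ∈ Finset.univ.filter (fun a => a ∈ c.supp) ↔ a ∈ c.supp := by simp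
  refine hext _ le_sup_left (Finset.univ.filter (fun a => a ∈ c.supp)) ?_
    (fun a => Sum.inr (i, g a)) ?_ ?_ ?_ ⟨∅, ?_, ?_⟩
  · exact fun a ha => hess a ((memP a).1 ha)
  · intro a ha a' ha' h
    rw [memP] at ha ha'
    simp only [Sum.inr.injEq, Prod.mk.injEq, true_and] at h
    rw [hgf a ha, hgf a' ha'] at h
    simpa using f.injective h
  · intro a ha a' ha' h
    rw [memP] at ha ha'
    have := hf ⟨a, ha⟩ ⟨a', ha'⟩ h
    rw [← hgf, ← hgf, sup_fromEdgeSet_adj] at this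
    rw [sup_fromEdgeSet_adj, unionCopies_adj_inr_inr]
    simpa using this
  · intro a ha a' ha' h
    rw [memP] at ha ha'
    exact absurd ((ConnectedComponent.sound h.symm.reachable).trans ha) ha'
  · intro a _ x h
    simp at h
  · obtain ⟨a, ha⟩ := c.nonempty_supp
    obtain ⟨n, hn, hr⟩ := hN a (hess a ha)
    simp only [Finset.card_empty, zero_add]
    exact Finset.card_pos.2 ⟨n, Finset.mem_inter.2 ⟨hn, (memP n).2
      ((ConnectedComponent.sound hr).trans ha)⟩⟩

end Join

section SmallTrees

variable {nF r k b : ℕ} {F : SimpleGraph (Fin nF)} {T : SimpleGraph (Fin r)} {Z : Type}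
  {π : Z → Fin b} {N : Finset (Fin nF)} {d : ℕ}

theorem partialExtends_of_card (hk : 2 * nF ≤ k) (hN : ∀ a ∈ N, a ∈ essential F T)
    (hleaf : ∀ a ∈ essential F T, a ∉ N → ∃ m ∈ N, F.Adj a m ∧ ∀ a', F.Adj a a' → a' = m)
    (hpend : (∃ a ∈ essential F T, a ∉ N) →
      ∀ x, ∃ φ : Fin (2 * nF) ↪ Z, ∀ i, π (φ i) = x)
    (hbd : b + d = N.card) : PartialExtends F T π k N d := by
  intro G hG P hP h hinj hadj hbound ⟨U, hU, hcard⟩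
  refine contains_of_partial hk N hN hleaf hpend hG P hP h hinj hadj hbound ⟨U, hU, ?_⟩
  omega

/-- If `T` is complete, a clique on `b = |essential| - d` vertices together with copies of `T`
can be saturated, as soon as every edge from the clique to a copy creates `F`. -/
theorem exists_satSingle_of_complete (hT : GoodTree F r T) (hTc : ∀ u v, u ≠ v → T.Adj u v)
    (hN : ∀ a, a ∈ N ↔ a ∈ essential F T) (hd : 1 ≤ d) (hbd : b + d = N.card)
    (hcop : ∀ u v A B pos s y, IsJoin F T u v A B pos s y → d ≤ (A ∪ B).card)
    (hout : ∀ k (π : Empty → Fin b), PartialExtends F T π k N d → ∀ x (q : Fin k × Fin r),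
      Contains (unionCopies (cliqueWithPendants π) k T ⊔
        SimpleGraph.fromEdgeSet {s(Sum.inl (Sum.inl x), Sum.inr q)}) F) :
    ∃ (J : Type) (_ : Fintype J) (H : SimpleGraph J) (k : ℕ), nF + 2 ≤ k ∧
      Fintype.card J = b ∧ SatSingle F (unionCopies H k T) := by
  classical
  let π : Empty → Fin b := fun z => z.elim
  have hext : PartialExtends F T π (2 * nF + 2) N d :=
    partialExtends_of_card (by omega) (fun a ha => (hN a).1 ha)
      (fun a ha ha' => absurd ((hN a).2 ha) ha') (fun ⟨a, ha, ha'⟩ => absurd ((hN a).2 ha) ha') hbd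
  obtain ⟨H, hH⟩ := exists_satSingle_unionCopies (F := F) (T := T) (k := 2 * nF + 2)
    (cliqueWithPendants π)
    (not_contains_host N (fun a ha => (hN a).1 ha) (fun a _ => Or.inl inferInstance) (by omega))
    (by
      rintro (x | z) q
      · exact hout _ π hext x q
      · exact z.elim)
    (by
      rintro ⟨i, u⟩ ⟨j, v⟩ hpq hadj
      rw [unionCopies_adj_inr_inr] at hadj
      by_cases hij : i = j
      · subst hij
        exact absurd ⟨rfl, hTc u v fun h => hpq (by rw [h])⟩ hadj
      obtain ⟨A, B, pos, s, y, hJ⟩ := exists_isJoin hT u v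
      refine hext.contains_copies hJ ?_ hij
      have : N ∩ (A ∪ B) = A ∪ B := by
        refine Finset.inter_eq_right.2 fun a ha => (hN a).2 ?_
        rcases Finset.mem_union.1 ha with ha | ha
        exacts [hJ.essential_left a ha, hJ.essential_right a ha]
      rw [this]
      exact hcop u v A B pos s y hJ)
  exact ⟨_, inferInstance, H, _, by omega, by simp, hH⟩

theorem IsJoin.ne {ℓ u : Fin r} {A B : Finset (Fin nF)} {pos : Fin nF → Fin r} {s y : Fin nF}
    (h : IsJoin F T ℓ u A B pos s y) : s ≠ y := fun e => h.disj s h.mem_left (e ▸ h.mem_right)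

theorem IsJoin.two_le_card {ℓ u : Fin r} {A B : Finset (Fin nF)} {pos : Fin nF → Fin r}
    {s y : Fin nF} (h : IsJoin F T ℓ u A B pos s y) : 2 ≤ (A ∪ B).card := by
  have : ({s, y} : Finset (Fin nF)) ⊆ A ∪ B := by
    intro a ha
    simp only [Finset.mem_insert, Finset.mem_singleton] at ha
    rcases ha with rfl | rfl
    exacts [Finset.mem_union_left _ h.mem_left, Finset.mem_union_right _ h.mem_right]
  simpa [Finset.card_pair h.ne] using Finset.card_le_card this

theorem exists_satSingle_of_card_one {T : SimpleGraph (Fin 1)} (hT : GoodTree F 1 T) :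
    ∃ (J : Type) (_ : Fintype J) (H : SimpleGraph J) (k : ℕ), nF + 2 ≤ k ∧
      SatSingle F (unionCopies H k T) := by
  classical
  have hN : ∀ a, a ∈ Finset.univ.filter (· ∈ essential F T) ↔ a ∈ essential F T := by simp
  generalize Finset.univ.filter (· ∈ essential F T) = N at hN
  obtain ⟨A, B, pos, s, y, hJ⟩ := exists_isJoin hT 0 0
  have hsN := (hN s).2 (hJ.essential_left s hJ.mem_left)
  have hyN := (hN y).2 (hJ.essential_right y hJ.mem_right)
  have hA : ∀ a ∈ A, a = s := fun a ha => hJ.inj_left a ha s hJ.mem_left (Subsingleton.elim _ _)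
  have hB : ∀ a ∈ B, a = y := fun a ha => hJ.inj_right a ha y hJ.mem_right (Subsingleton.elim _ _)
  have hpos : 0 < N.card := Finset.card_pos.2 ⟨s, hsN⟩
  obtain ⟨J, hJ', H, k, hk, -, hH⟩ := exists_satSingle_of_complete (N := N) (d := 1)
    (b := N.card - 1) hT (fun u v h => absurd (Subsingleton.elim u v) h) hN le_rfl (by omega)
    (fun u v A B pos s y h => by have := h.two_le_card; omega) (by
      intro k π hext x q
      have hys : y ≠ s := hJ.ne.symm
      refine hext _ le_sup_left {s, y} ?_
        (fun a => if a = s then Sum.inl (Sum.inl x) else Sum.inr q) ?_ ?_ ?_ ⟨{x}, ?_, ?_⟩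
      · intro a ha
        simp only [Finset.mem_insert, Finset.mem_singleton] at ha
        rw [← hN]
        rcases ha with rfl | rfl <;> assumption
      · intro a ha a' ha' h
        simp only [Finset.mem_insert, Finset.mem_singleton] at ha ha'
        rcases ha with rfl | rfl <;> rcases ha' with rfl | rfl <;> simp_all
      · intro a ha a' ha' h
        have hne := h.ne
        rw [sup_fromEdgeSet_adj]
        simp only [Finset.mem_insert, Finset.mem_singleton] at ha ha'
        rcases ha with rfl | rfl <;> rcases ha' with rfl | rfl <;> simp_all
      · intro a ha a' ha' h
        simp only [Finset.mem_insert, Finset.mem_singleton] at ha ha'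
        rcases ha with rfl | rfl
        · exact ⟨x, by simp⟩
        · exfalso
          rcases hJ.closed_right _ hJ.mem_right a' h with h' | ⟨-, rfl⟩
          · exact ha' (Or.inr (hB _ h'))
          · exact ha' (Or.inl rfl)
      · intro a ha x' h
        by_cases has : a = s
        · simp only [has, if_true, Sum.inl.injEq] at h
          simp [h]
        · simp [has] at h
      · have : N ∩ {s, y} = {s, y} := by
          refine Finset.inter_eq_right.2 fun a ha => ?_
          simp only [Finset.mem_insert, Finset.mem_singleton] at ha
          rcases ha with rfl | rfl <;> assumption
        rw [this, Finset.card_pair hJ.ne]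
        simp)
  exact ⟨J, hJ', H, k, hk, hH⟩

/-- An essential vertex of `F` has a neighbour if `T` has a vertex. -/
theorem exists_adj_of_essential (t : Fin r) {a : Fin nF} (ha : a ∈ essential F T) :
    ∃ a', F.Adj a a' := by
  by_contra! hno
  refine ha (contains_component_of_closed (fun x => x = a) (fun _ => t) ?_ ?_ ?_ rfl)
  · rintro x x' h rfl
    exact absurd h (hno _)
  · rintro x x' rfl rfl _
    rfl
  · rintro x x' rfl rfl h
    exact absurd rfl h.ne

/-- The component of an essential edge is not a single edge if `T` has an edge. -/
theorem exists_adj_ne_of_essential {t t' : Fin r} (ht : T.Adj t t') {a m : Fin nF}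
    (ha : a ∈ essential F T) (ham : F.Adj a m) :
    ∃ a', (F.Adj a a' ∧ a' ≠ m) ∨ (F.Adj m a' ∧ a' ≠ a) := by
  classical
  by_contra! hno
  have hne : a ≠ m := ham.ne
  refine ha (contains_component_of_closed (fun x => x = a ∨ x = m)
    (fun x => if x = a then t else t') ?_ ?_ ?_ (Or.inl rfl))
  · rintro x x' h (rfl | rfl)
    exacts [Or.inr ((hno x').1 h), Or.inl ((hno x').2 h)]
  · rintro x x' (rfl | rfl) (rfl | rfl) h <;> simp_all [ht.ne, ht.ne.symm]
  · rintro x x' (rfl | rfl) (rfl | rfl) h <;> simp_all [ht.symm, hne.symm]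

theorem exists_pendant_path_of_card_two {T : SimpleGraph (Fin 2)} (hT : GoodTree F 2 T)
    (h01 : T.Adj 0 1) :
    ∃ s q y, s ∈ essential F T ∧ s ≠ y ∧ F.Adj s q ∧ F.Adj q y ∧ (∀ a, F.Adj s a → a = q) ∧
      ∀ a, F.Adj q a → a = s ∨ a = y := by
  obtain ⟨A, B, pos, s₀, y₀, hJ⟩ := exists_isJoin hT 0 0
  have key : ∀ (A B : Finset (Fin nF)) (q y : Fin nF), IsJoin F T 0 0 A B pos q y →
      (∃ s ∈ A, s ≠ q) → ∃ s q y, s ∈ essential F T ∧ s ≠ y ∧ F.Adj s q ∧ F.Adj q y ∧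
        (∀ a, F.Adj s a → a = q) ∧ ∀ a, F.Adj q a → a = s ∨ a = y := by
    rintro A B q y hJ ⟨s, hs, hsq⟩
    have hA : ∀ a ∈ A, a = s ∨ a = q := by
      intro a ha
      have h1 : pos s ≠ pos q := fun h => hsq (hJ.inj_left s hs q hJ.mem_left h)
      have : pos a = pos s ∨ pos a = pos q := by omega
      exact this.imp (hJ.inj_left a ha s hs) (hJ.inj_left a ha q hJ.mem_left)
    have hsN : ∀ a, F.Adj s a → a = q := by
      intro a h
      rcases hJ.closed_left s hs a h with h' | h'
      · exact (hA a h').resolve_left h.ne.symm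
      · exact absurd h'.1 hsq
    obtain ⟨a, ha⟩ := exists_adj_of_essential 0 (hJ.essential_left s hs)
    have hadj : F.Adj s q := hsN a ha ▸ ha
    refine ⟨s, q, y, hJ.essential_left s hs, fun e => hJ.disj s hs (e ▸ hJ.mem_right), hadj,
      hJ.adj, hsN, fun a h => ?_⟩
    rcases hJ.closed_left q hJ.mem_left a h with h' | h'
    · exact Or.inl ((hA a h').resolve_right h.ne.symm)
    · exact Or.inr h'.2
  obtain ⟨a, ⟨h, hne⟩ | ⟨h, hne⟩⟩ :=
    exists_adj_ne_of_essential h01 (hJ.essential_left _ hJ.mem_left) hJ.adj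
  · rcases hJ.closed_left _ hJ.mem_left a h with h' | h'
    · exact key A B s₀ y₀ hJ ⟨a, h', h.ne.symm⟩
    · exact absurd h'.2 hne
  · rcases hJ.closed_right _ hJ.mem_right a h with h' | h'
    · exact key B A y₀ s₀ hJ.symm ⟨a, h', h.ne.symm⟩
    · exact absurd h'.2 hne

theorem exists_satSingle_of_card_two {T : SimpleGraph (Fin 2)} (hT : GoodTree F 2 T) {c : ℕ}
    (hc : c < 2) :
    ∃ (J : Type) (_ : Fintype J) (H : SimpleGraph J) (k : ℕ), nF + 2 ≤ k ∧
      Fintype.card J % 2 = c ∧ SatSingle F (unionCopies H k T) := by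
  classical
  have h01 : T.Adj 0 1 := by
    obtain ⟨v, hv⟩ := hT.1.connected.preconnected.exists_adj_of_nontrivial (0 : Fin 2)
    have : v = 1 := by
      have := hv.ne
      omega
    exact this ▸ hv
  have hTc : ∀ u v, u ≠ v → T.Adj u v := by
    intro u v h
    have : (u = 0 ∧ v = 1) ∨ (u = 1 ∧ v = 0) := by omega
    rcases this with ⟨rfl, rfl⟩ | ⟨rfl, rfl⟩
    exacts [h01, h01.symm]
  have hN : ∀ a, a ∈ Finset.univ.filter (· ∈ essential F T) ↔ a ∈ essential F T := by simp
  generalize Finset.univ.filter (· ∈ essential F T) = N at hN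
  obtain ⟨s, q, y, hs, hsy, hsq, hqy, hNs, hNq⟩ := exists_pendant_path_of_card_two hT h01
  have hq := essential_of_adj hsq hs
  have hy := essential_of_adj hqy hq
  have hsq' := hsq.ne
  have hqy' := hqy.ne
  have hPc : ({s, q, y} : Finset (Fin nF)).card = 3 := Finset.card_eq_three.2
    ⟨s, q, y, hsq', hsy, hqy', rfl⟩
  have hPN : ({s, q, y} : Finset (Fin nF)) ⊆ N := by
    intro a ha
    simp only [Finset.mem_insert, Finset.mem_singleton] at ha
    rw [hN]
    rcases ha with rfl | rfl | rfl <;> assumption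
  have h3 := Finset.card_le_card hPN
  by_cases hpar : (N.card - 1) % 2 = c
  · obtain ⟨J, hJ', H, k, hk, hcard, hH⟩ := exists_satSingle_of_complete (N := N) (d := 1)
      (b := N.card - 1) hT hTc hN le_rfl (by omega)
      (fun u v A B pos s y h => by have := h.two_le_card; omega) (by
        intro k π hext x p
        refine hext _ le_sup_left {s, q} ?_
          (fun a => if a = q then Sum.inl (Sum.inl x) else Sum.inr p) ?_ ?_ ?_ ⟨{x}, ?_, ?_⟩
        · intro a ha
          simp only [Finset.mem_insert, Finset.mem_singleton] at ha
          rcases ha with rfl | rfl <;> assumption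
        · intro a ha a' ha' h
          simp only [Finset.mem_insert, Finset.mem_singleton] at ha ha'
          rcases ha with rfl | rfl <;> rcases ha' with rfl | rfl <;> simp_all
        · intro a ha a' ha' h
          have hne := h.ne
          rw [sup_fromEdgeSet_adj]
          simp only [Finset.mem_insert, Finset.mem_singleton] at ha ha'
          rcases ha with rfl | rfl <;> rcases ha' with rfl | rfl <;> simp_all
        · intro a ha a' ha' h
          simp only [Finset.mem_insert, Finset.mem_singleton] at ha ha'
          rcases ha with rfl | rfl
          · exact absurd (Or.inr (hNs a' h)) ha'
          · exact ⟨x, by simp⟩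
        · intro a ha x' h
          by_cases has : a = q
          · simp only [has, if_true, Sum.inl.injEq] at h
            simp [h]
          · simp [has] at h
        · have : N ∩ {s, q} = {s, q} := by
            refine Finset.inter_eq_right.2 fun a ha => hPN ?_
            simp only [Finset.mem_insert, Finset.mem_singleton] at ha ⊢
            tauto
          rw [this, Finset.card_pair hsq']
          simp)
    exact ⟨J, hJ', H, k, hk, by rw [hcard]; exact hpar, hH⟩
  · obtain ⟨J, hJ', H, k, hk, hcard, hH⟩ := exists_satSingle_of_complete (N := N) (d := 2)
      (b := N.card - 2) hT hTc hN (by omega) (by omega)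
      (fun u v A B pos s y h => h.two_le_card) (by
        rintro k π hext x ⟨i, u⟩
        obtain ⟨w, hw⟩ : ∃ w : Fin 2, w ≠ u := exists_ne u
        have hwu := hTc w u hw
        refine hext _ le_sup_left {s, q, y} (fun a ha => (hN a).1 (hPN ha))
          (fun a => if a = y then Sum.inl (Sum.inl x) else if a = q then Sum.inr (i, u)
            else Sum.inr (i, w)) ?_ ?_ ?_ ⟨{x}, ?_, ?_⟩
        · intro a ha a' ha' h
          simp only [Finset.mem_insert, Finset.mem_singleton] at ha ha'
          rcases ha with rfl | rfl | rfl <;> rcases ha' with rfl | rfl | rfl <;>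
            simp_all [hw.symm]
        · intro a ha a' ha' h
          have hne := h.ne
          rw [sup_fromEdgeSet_adj]
          simp only [Finset.mem_insert, Finset.mem_singleton] at ha ha'
          have hsyn : ¬ F.Adj s y := fun h => hqy' (hNs y h).symm
          have hysn : ¬ F.Adj y s := fun h => hsyn h.symm
          have huw := hwu.symm
          rcases ha with rfl | rfl | rfl <;> rcases ha' with rfl | rfl | rfl <;> simp_all
        · intro a ha a' ha' h
          simp only [Finset.mem_insert, Finset.mem_singleton] at ha ha'
          rcases ha with rfl | rfl | rfl
          · exact absurd (Or.inr (Or.inl (hNs a' h))) ha'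
          · rcases hNq a' h with h' | h'
            · exact absurd (Or.inl h') ha'
            · exact absurd (Or.inr (Or.inr h')) ha'
          · exact ⟨x, by simp⟩
        · intro a ha x' h
          by_cases has : a = y
          · simp only [has, if_true, Sum.inl.injEq] at h
            simp [h]
          · by_cases haq : a = q <;> simp [has, haq] at h
            simp [hqy'] at h
        · rw [Finset.inter_eq_right.2 hPN, hPc]
          simp)
    exact ⟨J, hJ', H, k, hk, by rw [hcard]; omega, hH⟩

end SmallTrees

section LargeTrees

variable {nF r k b : ℕ} {F : SimpleGraph (Fin nF)} {T : SimpleGraph (Fin r)} {Z : Type}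
  {π : Z → Fin b}

open Classical in
/-- The essential vertices of `F` with at least two neighbours. -/
noncomputable def core (F : SimpleGraph (Fin nF)) (T : SimpleGraph (Fin r)) : Finset (Fin nF) :=
  Finset.univ.filter fun a => a ∈ essential F T ∧ ∃ x y, x ≠ y ∧ F.Adj a x ∧ F.Adj a y

theorem mem_core {a : Fin nF} :
    a ∈ core F T ↔ a ∈ essential F T ∧ ∃ x y, x ≠ y ∧ F.Adj a x ∧ F.Adj a y := by
  simp [core]

theorem eq_of_adj_of_notMem_core {a m m' : Fin nF} (ha : a ∈ essential F T) (hc : a ∉ core F T)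
    (h : F.Adj a m) (h' : F.Adj a m') : m = m' := by
  by_contra hne
  exact hc (mem_core.2 ⟨ha, m, m', hne, h, h'⟩)

theorem exists_mem_core_of_notMem_core {t t' : Fin r} (ht : T.Adj t t') {a : Fin nF}
    (ha : a ∈ essential F T) (hc : a ∉ core F T) :
    ∃ m ∈ core F T, F.Adj a m ∧ ∀ a', F.Adj a a' → a' = m := by
  obtain ⟨m, hm⟩ := exists_adj_of_essential t ha
  have huniq : ∀ a', F.Adj a a' → a' = m := fun a' h => eq_of_adj_of_notMem_core ha hc h hm
  refine ⟨m, ?_, hm, huniq⟩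
  obtain ⟨a', ⟨h, hne⟩ | ⟨h, hne⟩⟩ := exists_adj_ne_of_essential ht ha hm
  · exact absurd (huniq a' h) hne
  · exact mem_core.2 ⟨essential_of_adj hm ha, a', a, hne, h, hm.symm⟩

theorem exists_injOn_of_ncard_le {α β : Type*} [Finite α] [Finite β] [Nonempty β] {S : Set α}
    {S' : Set β} (h : S.ncard ≤ S'.ncard) :
    ∃ φ : α → β, (∀ a ∈ S, φ a ∈ S') ∧ Set.InjOn φ S := by
  obtain ⟨φ, h1, h2⟩ := (Set.toFinite S).exists_injOn_of_encard_le (t := S') (by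
    rw [← (Set.toFinite S).cast_ncard_eq, ← (Set.toFinite S').cast_ncard_eq]
    exact_mod_cast h)
  exact ⟨φ, h1, h2⟩

/-- If no neighbour of the essential vertex `y` is in the core, its component is a star which is
too large for `T`. -/
theorem ncard_neighborSet_lt_of_star {y : Fin nF} (hy : y ∈ essential F T)
    (hstar : ∀ a, F.Adj y a → a ∉ core F T) (t : Fin r) :
    (T.neighborSet t).ncard < (F.neighborSet y).ncard := by
  classical
  by_contra! hle
  have : Nonempty (Fin r) := ⟨t⟩
  obtain ⟨φ, hφ, hinj⟩ := exists_injOn_of_ncard_le hle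
  have hleaf : ∀ a, F.Adj y a → ∀ a', F.Adj a a' → a' = y := fun a ha a' h =>
    eq_of_adj_of_notMem_core (essential_of_adj ha hy) (hstar a ha) h ha.symm
  have hne : ∀ a, F.Adj y a → a ≠ y := fun a h => h.ne.symm
  have hφt : ∀ a, F.Adj y a → T.Adj t (φ a) := hφ
  refine hy (contains_component_of_closed (fun a => a = y ∨ F.Adj y a)
    (fun a => if a = y then t else φ a) ?_ ?_ ?_ (Or.inl rfl))
  · rintro a a' h (rfl | ha)
    · exact Or.inr h
    · exact Or.inl (hleaf a ha a' h)
  · rintro a a' (rfl | ha) (rfl | ha') h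
    · rfl
    · simp only [if_true, hne a' ha', if_false] at h
      exact absurd h (hφt a' ha').ne
    · simp only [if_true, hne a ha, if_false] at h
      exact absurd h.symm (hφt a ha).ne
    · simp only [hne a ha, hne a' ha', if_false] at h
      exact hinj ha ha' h
  · rintro a a' (rfl | ha) (rfl | ha') h
    · exact absurd rfl h.ne
    · simpa [hne a' ha'] using hφt a' ha'
    · simpa [hne a ha] using (hφt a ha).symm
    · exact absurd (hleaf a ha a' h) (hne a' ha')

theorem mem_core_or_mem_core {p t₁ t₂ : Fin r} (h₁ : T.Adj p t₁) (h₂ : T.Adj p t₂) (hne : t₁ ≠ t₂)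
    {s t y : Fin nF} (hs : s ∈ essential F T)
    (h : ∀ a, F.Adj s a → a = t ∨ a = y) : t ∈ core F T ∨ y ∈ core F T := by
  by_contra! hno
  have hlt := ncard_neighborSet_lt_of_star hs
    (fun a ha => by rcases h a ha with rfl | rfl; exacts [hno.1, hno.2]) p
  have h1 : (F.neighborSet s).ncard ≤ 2 :=
    (Set.ncard_le_ncard (t := {t, y}) (fun a ha => h a ha)).trans (Set.ncard_insert_le _ _ |>.trans
      (by simp))
  have h2 : 2 ≤ (T.neighborSet p).ncard := by
    rw [← Set.ncard_pair hne]
    refine Set.ncard_le_ncard ?_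
    rintro a (rfl | rfl)
    exacts [h₁, h₂]
  omega

theorem eq_of_dist_add_one_eq {V : Type*} {T : SimpleGraph V} (hT : T.IsTree) {ℓ v w w' : V}
    (h : T.Adj w v) (h' : T.Adj w' v) (hd : T.dist ℓ w + 1 = T.dist ℓ v)
    (hd' : T.dist ℓ w' + 1 = T.dist ℓ v) : w = w' := by
  classical
  have key : ∀ w (h : T.Adj w v), T.dist ℓ w + 1 = T.dist ℓ v →
      ∃ p : T.Walk ℓ w, (p.concat h).IsPath := by
    intro w h hd
    obtain ⟨p, hp, hlen⟩ := (hT.connected ℓ w).exists_path_of_dist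
    refine ⟨p, (Walk.concat_isPath_iff h).2 ⟨hp, fun hv => ?_⟩⟩
    have h1 := dist_le (p.takeUntil v hv)
    have h2 := p.length_takeUntil_le_length hv
    omega
  obtain ⟨p, hp⟩ := key w h hd
  obtain ⟨p', hp'⟩ := key w' h' hd'
  have := (hT.existsUnique_path ℓ v).unique hp hp'
  rw [← Walk.penultimate_concat p h, this, Walk.penultimate_concat]

theorem exists_leaf (hT : T.IsTree) (hr : 3 ≤ r) :
    ∃ ℓ p p', T.Adj ℓ p ∧ (∀ w, T.Adj ℓ w → w = p) ∧ T.Adj p p' ∧ p' ≠ ℓ := by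
  classical
  have : Nontrivial (Fin r) := Fin.nontrivial_iff_two_le.2 (by omega)
  obtain ⟨ℓ, hℓ⟩ := hT.exists_vert_degree_one_of_nontrivial
  obtain ⟨p, hp, hu⟩ := degree_eq_one_iff_existsUnique_adj.1 hℓ
  by_contra! hno
  obtain ⟨w, hw⟩ : ∃ w : Fin r, w ∉ ({ℓ, p} : Finset (Fin r)) := by
    by_contra! hall
    have h1 : (Finset.univ : Finset (Fin r)).card ≤ 2 :=
      (Finset.card_le_card fun a _ => hall a).trans Finset.card_le_two
    simp at h1
    omega
  have hcl := mem_of_reachable_of_closed (F := T) (P := fun a => a = ℓ ∨ a = p) (by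
    rintro a a' h (rfl | rfl)
    · exact Or.inr (hu a' h)
    · exact Or.inl (hno ℓ a a' hp hu h)) (hT.connected ℓ w) (Or.inl rfl)
  simp at hw
  tauto

end LargeTrees

section Hits

variable {nF r k b : ℕ} {F : SimpleGraph (Fin nF)} {T : SimpleGraph (Fin r)} {Z : Type}
  {π : Z → Fin b} {ℓ u p p' : Fin r} {A B : Finset (Fin nF)} {pos : Fin nF → Fin r}
  {s y t : Fin nF}

/-- Joining a vertex outside the copies to a copy creates `F` if this vertex can play `s`. -/
theorem PartialExtends.contains_insert {N : Finset (Fin nF)} (hext : PartialExtends F T π k N 1)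
    (hJ : IsJoin F T ℓ u A B pos s y) (j : Fin b ⊕ Z) (i : Fin k)
    (hbd : (∃ x, j = Sum.inl x) ∨ ∀ a, F.Adj s a → a = y)
    (hcount : ∃ U : Finset (Fin b), (∀ x, j = Sum.inl x → x ∈ U) ∧
      U.card + 1 ≤ (N ∩ insert s B).card) :
    Contains (unionCopies (cliqueWithPendants π) k T ⊔
      SimpleGraph.fromEdgeSet {s(Sum.inl j, Sum.inr (i, u))}) F := by
  classical
  have hB : ∀ a ∈ B, a ≠ s := fun a hb e => hJ.disj s hJ.mem_left (e ▸ hb)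
  obtain ⟨U, hU, hcard⟩ := hcount
  refine hext _ le_sup_left (insert s B) ?_
    (fun a => if a = s then Sum.inl j else Sum.inr (i, pos a)) ?_ ?_ ?_ ⟨U, ?_, hcard⟩
  · intro a ha
    rcases Finset.mem_insert.1 ha with rfl | ha
    exacts [hJ.essential_left a hJ.mem_left, hJ.essential_right a ha]
  · intro a ha a' ha' h
    rw [Finset.mem_insert] at ha ha'
    rcases ha with rfl | ha <;> rcases ha' with rfl | ha'
    · rfl
    · simp [hB a' ha'] at h
    · simp [hB a ha] at h
    · simp only [hB a ha, hB a' ha', if_false, Sum.inr.injEq, Prod.mk.injEq, true_and] at h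
      exact hJ.inj_right a ha a' ha' h
  · intro a ha a' ha' h
    rw [sup_fromEdgeSet_adj]
    rw [Finset.mem_insert] at ha ha'
    rcases ha with rfl | ha <;> rcases ha' with rfl | ha'
    · exact absurd rfl h.ne
    · obtain rfl : a' = y := by
        rcases hJ.closed_left a hJ.mem_left a' h with h' | h'
        · exact absurd ha' (hJ.disj a' h')
        · exact h'.2
      simp [hB a' ha', hJ.pos_right]
    · obtain rfl : a = y := by
        rcases hJ.closed_right a ha a' h with h' | h'
        · exact absurd h' (hJ.disj a' hJ.mem_left)
        · exact h'.1
      simp [hB a ha, hJ.pos_right]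
    · left
      simpa [hB a ha, hB a' ha'] using hJ.adj_right a ha a' ha' h
  · intro a ha a' ha' h
    rw [Finset.mem_insert, not_or] at ha'
    rcases Finset.mem_insert.1 ha with rfl | ha
    · rcases hbd with ⟨x, hx⟩ | hbd
      · exact ⟨x, by simp [hx]⟩
      · exact absurd (hbd a' h ▸ hJ.mem_right) ha'.2
    · rcases hJ.closed_right a ha a' h with h' | h'
      · exact absurd h' ha'.2
      · exact absurd h'.2 ha'.1
  · intro a ha x h
    by_cases has : a = s
    · simp only [has, if_true, Sum.inl.injEq] at h
      exact hU x h
    · simp [has] at h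

/-- Joining a pendant vertex to a copy creates `F` if it can play a vertex `s` having
exactly one neighbour `t` besides `y`. -/
theorem PartialExtends.contains_pendant {N : Finset (Fin nF)} (hext : PartialExtends F T π k N 1)
    (hJ : IsJoin F T ℓ u A B pos s y) (z : Z) (i : Fin k)
    (htA : t ∈ A) (hst : F.Adj s t) (hs : ∀ a, F.Adj s a → a = t ∨ a = y)
    (hcount : 2 ≤ (N ∩ insert t (insert s B)).card) :
    Contains (unionCopies (cliqueWithPendants π) k T ⊔
      SimpleGraph.fromEdgeSet {s(Sum.inl (Sum.inr z), Sum.inr (i, u))}) F := by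
  classical
  have hB : ∀ a ∈ B, a ≠ s := fun a hb e => hJ.disj s hJ.mem_left (e ▸ hb)
  have hBt : ∀ a ∈ B, a ≠ t := fun a hb e => hJ.disj t htA (e ▸ hb)
  have hts : t ≠ s := hst.ne.symm
  have htB : ∀ a ∈ B, ¬ F.Adj t a := fun a ha h => by
    rcases hJ.closed_left t htA a h with h' | h'
    · exact hJ.disj a h' ha
    · exact hts h'.1
  refine hext _ le_sup_left (insert t (insert s B)) ?_
    (fun a => if a = t then Sum.inl (Sum.inl (π z)) else if a = s then Sum.inl (Sum.inr z)
      else Sum.inr (i, pos a)) ?_ ?_ ?_ ⟨{π z}, ?_, by simpa using hcount⟩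
  · intro a ha
    simp only [Finset.mem_insert] at ha
    rcases ha with rfl | rfl | ha
    exacts [hJ.essential_left a htA, hJ.essential_left a hJ.mem_left, hJ.essential_right a ha]
  · intro a ha a' ha' h
    simp only [Finset.mem_insert] at ha ha'
    rcases ha with rfl | rfl | ha <;> rcases ha' with rfl | rfl | ha'
    · rfl
    · simp [hts.symm] at h
    · simp [hB a' ha', hBt a' ha'] at h
    · simp [hts.symm] at h
    · rfl
    · simp [hB a' ha', hBt a' ha', hts.symm] at h
    · simp [hB a ha, hBt a ha] at h
    · simp [hB a ha, hBt a ha, hts.symm] at h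
    · simp only [hB a ha, hB a' ha', hBt a ha, hBt a' ha', if_false, Sum.inr.injEq,
        Prod.mk.injEq, true_and] at h
      exact hJ.inj_right a ha a' ha' h
  · intro a ha a' ha' h
    rw [sup_fromEdgeSet_adj]
    simp only [Finset.mem_insert] at ha ha'
    rcases ha with rfl | rfl | ha <;> rcases ha' with rfl | rfl | ha'
    · exact absurd rfl h.ne
    · simp [hts.symm]
    · exact absurd h (htB a' ha')
    · simp [hts.symm]
    · exact absurd rfl h.ne
    · obtain rfl : a' = y := (hs a' h).resolve_left (hBt a' ha')
      simp [hB a' ha', hBt a' ha', hts.symm, hJ.pos_right]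
    · exact absurd h.symm (htB a ha)
    · obtain rfl : a = y := (hs a h.symm).resolve_left (hBt a ha)
      simp [hB a ha, hBt a ha, hts.symm, hJ.pos_right]
    · left
      simpa [hB a ha, hB a' ha', hBt a ha, hBt a' ha'] using hJ.adj_right a ha a' ha' h
  · intro a ha a' ha' h
    simp only [Finset.mem_insert, not_or] at ha ha'
    rcases ha with rfl | rfl | ha
    · exact ⟨π z, by simp⟩
    · rcases hs a' h with h' | h'
      · exact absurd h' ha'.1
      · exact absurd (h' ▸ hJ.mem_right) ha'.2.2
    · rcases hJ.closed_right a ha a' h with h' | h'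
      · exact absurd h' ha'.2.2
      · exact absurd h'.2 ha'.2.1
  · intro a ha x h
    by_cases hat : a = t
    · simp only [hat, if_true, Sum.inl.injEq] at h
      simp [h]
    · by_cases has : a = s
      · simp [has, hts.symm] at h
      · simp [hat, has] at h

/-- Joining a clique vertex to `u` creates `F` if there are adjacent core vertices `q` and `m` such
that the other neighbours of `q` are leaves and fit among the neighbours of `u`. -/
theorem PartialExtends.contains_clique (hext : PartialExtends F T π k (core F T) 1)
    {q m : Fin nF} (hq : q ∈ core F T) (hm : m ∈ core F T) (hqm : F.Adj q m)
    (hother : ∀ a, F.Adj q a → a ≠ m → a ∉ core F T)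
    (hdeg : (F.neighborSet q \ {m}).ncard ≤ (T.neighborSet u).ncard) (x : Fin b) (i : Fin k) :
    Contains (unionCopies (cliqueWithPendants π) k T ⊔
      SimpleGraph.fromEdgeSet {s(Sum.inl (Sum.inl x), Sum.inr (i, u))}) F := by
  classical
  have : Nonempty (Fin r) := ⟨u⟩
  obtain ⟨φ, hφ, hinj⟩ := exists_injOn_of_ncard_le hdeg
  have hφu : ∀ a, F.Adj q a → a ≠ m → T.Adj u (φ a) := fun a h h' => hφ a ⟨h, h'⟩
  have hqe := (mem_core.1 hq).1
  have hmq : m ≠ q := hqm.ne.symm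
  have hleaf : ∀ a, F.Adj q a → a ≠ m → ∀ a', F.Adj a a' → a' = q := fun a h h' a' h'' =>
    eq_of_adj_of_notMem_core (essential_of_adj h hqe) (hother a h h') h'' h.symm
  have memP : ∀ a, a ∈ insert m (insert q (Finset.univ.filter fun a => F.Adj q a ∧ a ≠ m)) ↔
      a = m ∨ a = q ∨ (F.Adj q a ∧ a ≠ m) := by simp
  refine hext _ le_sup_left (insert m (insert q (Finset.univ.filter fun a => F.Adj q a ∧ a ≠ m))) ?_
    (fun a => if a = m then Sum.inl (Sum.inl x) else if a = q then Sum.inr (i, u)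
      else Sum.inr (i, φ a)) ?_ ?_ ?_ ⟨{x}, ?_, ?_⟩
  · intro a ha
    rcases (memP a).1 ha with rfl | rfl | ha
    exacts [(mem_core.1 hm).1, hqe, essential_of_adj ha.1 hqe]
  · intro a ha a' ha' h
    rw [memP] at ha ha'
    rcases ha with rfl | rfl | ⟨ha, ham⟩ <;> rcases ha' with rfl | rfl | ⟨ha', ham'⟩
    · rfl
    · simp [hmq.symm] at h
    · simp [ham', ha'.ne.symm] at h
    · simp [hmq.symm] at h
    · rfl
    · simp only [hmq.symm, ham', ha'.ne.symm, if_true, if_false, Sum.inr.injEq, Prod.mk.injEq,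
        true_and] at h
      exact absurd h (hφu a' ha' ham').ne
    · simp [ham, ha.ne.symm] at h
    · simp only [hmq.symm, ham, ha.ne.symm, if_true, if_false, Sum.inr.injEq, Prod.mk.injEq,
        true_and] at h
      exact absurd h.symm (hφu a ha ham).ne
    · simp only [ham, ham', ha.ne.symm, ha'.ne.symm, if_false, Sum.inr.injEq, Prod.mk.injEq,
        true_and] at h
      exact hinj ⟨ha, ham⟩ ⟨ha', ham'⟩ h
  · intro a ha a' ha' h
    rw [sup_fromEdgeSet_adj]
    rw [memP] at ha ha'
    rcases ha with rfl | rfl | ⟨ha, ham⟩ <;> rcases ha' with rfl | rfl | ⟨ha', ham'⟩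
    · exact absurd rfl h.ne
    · simp [hmq.symm]
    · exact absurd (hleaf a' ha' ham' a h.symm) hmq
    · simp [hmq.symm]
    · exact absurd rfl h.ne
    · simp [ham', ha'.ne.symm, hmq.symm, hφu a' ha' ham']
    · exact absurd (hleaf a ha ham a' h) hmq
    · simp [ham, ha.ne.symm, hmq.symm, (hφu a ha ham).symm]
    · exact absurd (hleaf a ha ham a' h) ha'.ne.symm
  · intro a ha a' ha' h
    rw [memP] at ha'
    rcases (memP a).1 ha with rfl | rfl | ⟨ha, ham⟩
    · exact ⟨x, by simp⟩
    · by_cases ham' : a' = m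
      · exact absurd (Or.inl ham') ha'
      · exact absurd (Or.inr (Or.inr ⟨h, ham'⟩)) ha'
    · exact absurd (Or.inr (Or.inl (hleaf a ha ham a' h))) ha'
  · intro a ha x' h
    by_cases ham : a = m
    · simp only [ham, if_true, Sum.inl.injEq] at h
      simp [h]
    · by_cases haq : a = q
      · simp [haq, hmq.symm] at h
      · simp [ham, haq] at h
  · rw [Finset.card_singleton, one_add_one_eq_two, ← Finset.card_pair hmq]
    refine Finset.card_le_card fun a ha => ?_
    simp only [Finset.mem_insert, Finset.mem_singleton] at ha
    rw [Finset.mem_inter, memP]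
    rcases ha with rfl | rfl
    exacts [⟨hm, Or.inl rfl⟩, ⟨hq, Or.inr (Or.inl rfl)⟩]

theorem IsJoin.eq_or_eq_of_adj (hJ : IsJoin F T ℓ u A B pos s y) (hℓ : ∀ w, T.Adj ℓ w → w = p)
    (htA : t ∈ A) (hst : F.Adj s t) : ∀ a, F.Adj s a → a = t ∨ a = y := by
  intro a h
  rcases hJ.closed_left s hJ.mem_left a h with h' | h'
  · left
    have h1 := hJ.adj_left s hJ.mem_left a h' h
    have h2 := hJ.adj_left s hJ.mem_left t htA hst
    rw [hJ.pos_left] at h1 h2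
    exact hJ.inj_left a h' t htA ((hℓ _ h1).trans (hℓ _ h2).symm)
  · exact Or.inr h'.2

theorem IsJoin.eq_of_adj (hJ : IsJoin F T ℓ u A B pos s y) (hno : ∀ t ∈ A, ¬ F.Adj s t) :
    ∀ a, F.Adj s a → a = y := by
  intro a h
  rcases hJ.closed_left s hJ.mem_left a h with h' | h'
  · exact absurd h (hno a h')
  · exact h'.2

theorem IsJoin.mem_core_left (hJ : IsJoin F T ℓ u A B pos s y) (htA : t ∈ A) (hst : F.Adj s t) :
    s ∈ core F T :=
  mem_core.2 ⟨hJ.essential_left s hJ.mem_left, t, y, fun e => hJ.disj t htA (e ▸ hJ.mem_right),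
    hst, hJ.adj⟩

theorem IsJoin.notMem_core_left (hJ : IsJoin F T ℓ u A B pos s y)
    (hno : ∀ t ∈ A, ¬ F.Adj s t) : s ∉ core F T := by
  intro h
  obtain ⟨-, a, a', hne, ha, ha'⟩ := mem_core.1 h
  exact hne ((hJ.eq_of_adj hno a ha).trans (hJ.eq_of_adj hno a' ha').symm)

theorem IsJoin.mem_core_right (hJ : IsJoin F T ℓ u A B pos s y) (hpp' : T.Adj p p')
    (hno : ∀ t ∈ A, ¬ F.Adj s t) : y ∈ core F T := by
  obtain ⟨m, hm, hsm, -⟩ := exists_mem_core_of_notMem_core hpp'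
    (hJ.essential_left s hJ.mem_left) (hJ.notMem_core_left hno)
  exact hJ.eq_of_adj hno m hsm ▸ hm

theorem ncard_neighborSet_diff_le_one {q m a : Fin nF} (h : ∀ x, F.Adj q x → x = a ∨ x = m) :
    (F.neighborSet q \ {m}).ncard ≤ 1 := by
  rw [← Set.ncard_singleton a]
  refine Set.ncard_le_ncard ?_
  rintro x ⟨hx, hxm⟩
  exact (h x hx).resolve_right hxm

theorem one_le_ncard_neighborSet (h : T.Adj ℓ p) : 1 ≤ (T.neighborSet ℓ).ncard :=
  (Set.ncard_pos).2 ⟨p, h⟩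

/-- There are adjacent core vertices `q`, `m` such that all other neighbours of `q` are leaves, and
there are at most as many of them as the maximum degree of `T`. -/
theorem exists_core_vertex_with_leaves (hT : GoodTree F r T) (hℓp : T.Adj ℓ p)
    (hℓ : ∀ w, T.Adj ℓ w → w = p) (hpp' : T.Adj p p') (hp' : p' ≠ ℓ)
    (hu : ∀ t, (T.neighborSet t).ncard ≤ (T.neighborSet u).ncard) :
    ∃ q ∈ core F T, ∃ m ∈ core F T, F.Adj q m ∧ (∀ a, F.Adj q a → a ≠ m → a ∉ core F T) ∧
      (F.neighborSet q \ {m}).ncard ≤ (T.neighborSet u).ncard := by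
  have hdeg : 1 ≤ (T.neighborSet u).ncard := (one_le_ncard_neighborSet hℓp).trans (hu ℓ)
  obtain ⟨A, B, pos, s, y, hJ⟩ := exists_isJoin hT ℓ ℓ
  have hleafy : ∀ {A B : Finset (Fin nF)} {s y : Fin nF}, IsJoin F T ℓ ℓ A B pos s y →
      (∀ t ∈ A, ¬ F.Adj s t) →
      ∃ q ∈ core F T, ∃ m ∈ core F T, F.Adj q m ∧ (∀ a, F.Adj q a → a ≠ m → a ∉ core F T) ∧
        (F.neighborSet q \ {m}).ncard ≤ (T.neighborSet u).ncard := by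
    intro A B s y hJ hno
    have hy := hJ.mem_core_right hℓp hno
    have hs := hJ.notMem_core_left hno
    obtain ⟨m, hmB, hm⟩ : ∃ m ∈ B, F.Adj y m := by
      by_contra! hno'
      exact hJ.symm.notMem_core_left hno' hy
    have hN := hJ.symm.eq_or_eq_of_adj hℓ hmB hm
    have hmc : m ∈ core F T := (mem_core_or_mem_core hℓp.symm hpp' hp'.symm
      (hJ.essential_right y hJ.mem_right) hN).resolve_right hs
    refine ⟨y, hy, m, hmc, hm, fun a ha hne => ?_,
      (ncard_neighborSet_diff_le_one fun x hx => (hN x hx).symm).trans hdeg⟩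
    rwa [(hN a ha).resolve_left hne]
  by_cases hA : ∃ t ∈ A, F.Adj s t
  swap
  · exact hleafy hJ (by simpa using hA)
  by_cases hB : ∃ t ∈ B, F.Adj y t
  swap
  · exact hleafy hJ.symm (by simpa using hB)
  obtain ⟨t, htA, hst⟩ := hA
  obtain ⟨w, hwB, hyw⟩ := hB
  have hs := hJ.mem_core_left htA hst
  have hy := hJ.symm.mem_core_left hwB hyw
  obtain ⟨q, hq, hmax⟩ := Finset.exists_max_image (B ∩ core F T) (fun a => T.dist ℓ (pos a))
    ⟨y, Finset.mem_inter.2 ⟨hJ.mem_right, hy⟩⟩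
  rw [Finset.mem_inter] at hq
  by_cases hqy : q = y
  · subst hqy
    have hN := hJ.symm.eq_or_eq_of_adj hℓ hwB hyw
    refine ⟨q, hy, s, hs, hJ.adj.symm, fun a ha hne hac => ?_,
      (ncard_neighborSet_diff_le_one hN).trans hdeg⟩
    obtain rfl := (hN a ha).resolve_right hne
    have h1 := hmax a (Finset.mem_inter.2 ⟨hwB, hac⟩)
    have h2 := hJ.adj_right _ hJ.mem_right a hwB hyw
    rw [hJ.pos_right] at h2
    simp [hJ.pos_right, dist_eq_one_iff_adj.2 h2] at h1
  · have hqB : ∀ a, F.Adj q a → a ∈ B := by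
      intro a h
      rcases hJ.closed_right q hq.1 a h with h' | h'
      exacts [h', absurd h'.1 hqy]
    have hqe := hJ.essential_right q hq.1
    by_cases hm : ∃ m ∈ core F T, F.Adj q m
    · obtain ⟨m, hm, hqm⟩ := hm
      have hnear : ∀ a ∈ core F T, F.Adj q a →
          T.dist ℓ (pos a) + 1 = T.dist ℓ (pos q) := by
        intro a ha h
        have h1 := hmax a (Finset.mem_inter.2 ⟨hqB a h, ha⟩)
        have h2 := hJ.adj_right q hq.1 a (hqB a h) h
        have h3 := hT.1.dist_ne_of_adj ℓ h2
        have h4 := h2.diff_dist_adj (u := ℓ)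
        omega
      refine ⟨q, hq.2, m, hm, hqm, fun a ha hne hac => hne ?_, ?_⟩
      · refine hJ.inj_right a (hqB a ha) m (hqB m hqm) (eq_of_dist_add_one_eq hT.1 (ℓ := ℓ)
          (v := pos q) ?_ ?_ (hnear a hac ha) (hnear m hm hqm))
        exacts [(hJ.adj_right q hq.1 a (hqB a ha) ha).symm,
          (hJ.adj_right q hq.1 m (hqB m hqm) hqm).symm]
      · refine (Set.ncard_le_ncard Set.sdiff_subset).trans (le_trans ?_ (hu (pos q)))
        refine Set.ncard_le_ncard_of_injOn pos ?_ ?_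
        · exact fun a ha => hJ.adj_right q hq.1 a (hqB a ha) ha
        · exact fun a ha a' ha' h => hJ.inj_right a (hqB a ha) a' (hqB a' ha') h
    · push Not at hm
      exfalso
      have hreach : F.Reachable q y := (hJ.reach_right q hq.1).symm.trans hJ.adj.reachable
      have := mem_of_reachable_of_closed (P := fun a => a = q ∨ F.Adj q a) (by
        rintro a a' h (rfl | ha)
        · exact Or.inr h
        · exact Or.inl (eq_of_adj_of_notMem_core (essential_of_adj ha hqe)
            (fun hac => hm a hac ha) h ha.symm)) hreach (Or.inl rfl)
      rcases this with h | h
      · exact hqy h.symm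
      · exact hm y hy h

theorem two_le_card_inter {N P : Finset (Fin nF)} {a a' : Fin nF} (hne : a ≠ a') (ha : a ∈ N)
    (ha' : a' ∈ N) (h : a ∈ P) (h' : a' ∈ P) : 2 ≤ (N ∩ P).card := by
  rw [← Finset.card_pair hne]
  refine Finset.card_le_card fun x hx => ?_
  simp only [Finset.mem_insert, Finset.mem_singleton] at hx
  rcases hx with rfl | rfl <;> exact Finset.mem_inter.2 ⟨by assumption, by assumption⟩

theorem contains_of_pendant (hext : PartialExtends F T π k (core F T) 1) (hT : GoodTree F r T)
    (hℓp : T.Adj ℓ p) (hℓ : ∀ w, T.Adj ℓ w → w = p) (hpp' : T.Adj p p') (hp' : p' ≠ ℓ)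
    (z : Z) (i : Fin k) (u : Fin r) :
    Contains (unionCopies (cliqueWithPendants π) k T ⊔
      SimpleGraph.fromEdgeSet {s(Sum.inl (Sum.inr z), Sum.inr (i, u))}) F := by
  obtain ⟨A, B, pos, s, y, hJ⟩ := exists_isJoin hT ℓ u
  by_cases hA : ∃ t ∈ A, F.Adj s t
  · obtain ⟨t, htA, hst⟩ := hA
    have hN := hJ.eq_or_eq_of_adj hℓ htA hst
    have hs := hJ.mem_core_left htA hst
    refine hext.contains_pendant hJ z i htA hst hN ?_
    rcases mem_core_or_mem_core hℓp.symm hpp' hp'.symm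
      (hJ.essential_left s hJ.mem_left) hN with h | h
    · exact two_le_card_inter hst.ne hs h (by simp) (by simp)
    · exact two_le_card_inter hJ.ne hs h (by simp) (by simp [hJ.mem_right])
  · push Not at hA
    refine hext.contains_insert hJ _ i (Or.inr (hJ.eq_of_adj hA)) ⟨∅, by simp, ?_⟩
    rw [Finset.card_empty, zero_add]
    exact Finset.card_pos.2 ⟨y, Finset.mem_inter.2 ⟨hJ.mem_core_right hℓp hA,
      Finset.mem_insert_of_mem hJ.mem_right⟩⟩

theorem contains_of_clique (hext : PartialExtends F T π k (core F T) 1) (hT : GoodTree F r T)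
    (hℓp : T.Adj ℓ p) (hℓ : ∀ w, T.Adj ℓ w → w = p) (hpp' : T.Adj p p') (hp' : p' ≠ ℓ)
    (x : Fin b) (i : Fin k) (u : Fin r) :
    Contains (unionCopies (cliqueWithPendants π) k T ⊔
      SimpleGraph.fromEdgeSet {s(Sum.inl (Sum.inl x), Sum.inr (i, u))}) F := by
  obtain ⟨A, B, pos, s, y, hJ⟩ := exists_isJoin hT ℓ u
  have hins : ∀ a ∈ core F T, ∀ a' ∈ core F T, a ≠ a' → a ∈ insert s B → a' ∈ insert s B →
      Contains (unionCopies (cliqueWithPendants π) k T ⊔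
        SimpleGraph.fromEdgeSet {s(Sum.inl (Sum.inl x), Sum.inr (i, u))}) F := by
    intro a ha a' ha' hne h h'
    refine hext.contains_insert hJ _ i (Or.inl ⟨x, rfl⟩) ⟨{x}, by simp, ?_⟩
    simpa using two_le_card_inter hne ha ha' h h'
  have : Nontrivial (Fin r) := ⟨ℓ, p, hℓp.ne⟩
  obtain ⟨w, hw⟩ := hT.1.connected.preconnected.exists_adj_of_nontrivial u
  have hdeg := one_le_ncard_neighborSet hw
  by_cases hA : ∃ t ∈ A, F.Adj s t
  · obtain ⟨t, htA, hst⟩ := hA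
    have hN := hJ.eq_or_eq_of_adj hℓ htA hst
    have hs := hJ.mem_core_left htA hst
    by_cases hn : ∃ n ∈ B, n ∈ core F T
    · obtain ⟨n, hnB, hn⟩ := hn
      exact hins s hs n hn (fun e => hJ.disj s hJ.mem_left (e ▸ hnB)) (by simp) (by simp [hnB])
    push Not at hn
    have hy := hn y hJ.mem_right
    have ht := (mem_core_or_mem_core hℓp.symm hpp' hp'.symm
      (hJ.essential_left s hJ.mem_left) hN).resolve_right hy
    refine hext.contains_clique hs ht hst (fun a ha hne => ?_)
      ((ncard_neighborSet_diff_le_one fun x hx => (hN x hx).symm).trans hdeg) x i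
    rwa [(hN a ha).resolve_left hne]
  · push Not at hA
    have hy := hJ.mem_core_right hℓp hA
    by_cases hn : ∃ n ∈ B, n ∈ core F T ∧ n ≠ y
    · obtain ⟨n, hnB, hn, hne⟩ := hn
      exact hins n hn y hy hne (by simp [hnB]) (by simp [hJ.mem_right])
    push Not at hn
    have hstar : ∀ a, F.Adj y a → a ∉ core F T := by
      intro a h hac
      rcases hJ.closed_right y hJ.mem_right a h with h' | ⟨-, rfl⟩
      · exact h.ne.symm (hn a h' hac)
      · exact hJ.notMem_core_left hA hac
    have hlt := ncard_neighborSet_lt_of_star (hJ.essential_right y hJ.mem_right) hstar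
    have hle : (F.neighborSet y \ {s}).ncard ≤ (T.neighborSet u).ncard := by
      have hB : ∀ a ∈ F.neighborSet y \ {s}, a ∈ B := by
        rintro a ⟨h, hne⟩
        rcases hJ.closed_right y hJ.mem_right a h with h' | h'
        exacts [h', absurd h'.2 hne]
      refine Set.ncard_le_ncard_of_injOn pos ?_ ?_
      · intro a ha
        have := hJ.adj_right y hJ.mem_right a (hB a ha) ha.1
        rwa [hJ.pos_right] at this
      · exact fun a ha a' ha' h => hJ.inj_right a (hB a ha) a' (hB a' ha') h
    have hu : ∀ t, (T.neighborSet t).ncard ≤ (T.neighborSet u).ncard := by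
      intro t
      have h1 := hlt t
      have h2 := Set.ncard_sdiff_singleton_add_one (s := F.neighborSet y) (a := s) hJ.adj.symm
      omega
    obtain ⟨q, hq, m, hm, hqm, hother, hcard⟩ :=
      exists_core_vertex_with_leaves hT hℓp hℓ hpp' hp' hu
    exact hext.contains_clique hq hm hqm hother hcard x i

theorem exists_satSingle_of_three_le (hT : GoodTree F r T) (hr : 3 ≤ r) {c : ℕ} (hc : c < r) :
    ∃ (J : Type) (_ : Fintype J) (H : SimpleGraph J) (k : ℕ), nF + 2 ≤ k ∧
      Fintype.card J % r = c ∧ SatSingle F (unionCopies H k T) := by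
  classical
  obtain ⟨ℓ, p, p', hℓp, hℓ, hpp', hp'⟩ := exists_leaf hT.1 hr
  obtain ⟨u, -, hu⟩ := Finset.exists_max_image Finset.univ (fun t => (T.neighborSet t).ncard)
    ⟨ℓ, Finset.mem_univ _⟩
  obtain ⟨q, hq, m, hm, hqm, -, -⟩ :=
    exists_core_vertex_with_leaves hT hℓp hℓ hpp' hp' fun t => hu t (Finset.mem_univ t)
  have hcore : 2 ≤ (core F T).card := by
    simpa using two_le_card_inter hqm.ne hq hm (Finset.mem_univ q) (Finset.mem_univ m)
  obtain ⟨b, hb⟩ : ∃ b, b + 2 = (core F T).card := ⟨_, Nat.sub_add_cancel hcore⟩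
  obtain ⟨e, he⟩ : ∃ e, ((b + 1) + ((b + 1) * (2 * nF) + e)) % r = c := by
    refine ⟨c + ((b + 1) + (b + 1) * (2 * nF)) * (r - 1), ?_⟩
    obtain ⟨r, rfl⟩ : ∃ r', r = r' + 1 := ⟨r - 1, by omega⟩
    rw [show (b + 1) + ((b + 1) * (2 * nF) + (c + ((b + 1) + (b + 1) * (2 * nF)) * (r + 1 - 1))) =
      c + (r + 1) * ((b + 1) + (b + 1) * (2 * nF)) by simp; ring, Nat.add_mul_mod_self_left,
      Nat.mod_eq_of_lt hc]
  let π : (Fin (b + 1) × Fin (2 * nF)) ⊕ Fin e → Fin (b + 1) := Sum.elim Prod.fst fun _ => 0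
  have hNe : ∀ a ∈ core F T, a ∈ essential F T := fun a ha => (mem_core.1 ha).1
  have hleaf := fun a (ha : a ∈ essential F T) hc => exists_mem_core_of_notMem_core hℓp ha hc
  have hext : PartialExtends F T π (2 * nF + 2) (core F T) 1 :=
    partialExtends_of_card (by omega) hNe hleaf
      (fun _ x => ⟨⟨fun i => Sum.inl (x, i), fun i i' h => by simpa using h⟩, fun i => rfl⟩)
      (by omega)
  have hmeet : ∀ a ∈ essential F T, ∃ n ∈ core F T, F.Reachable n a := by
    intro a ha
    by_cases hac : a ∈ core F T
    · exact ⟨a, hac, Reachable.refl a⟩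
    · obtain ⟨n, hn, han, -⟩ := hleaf a ha hac
      exact ⟨n, hn, han.symm.reachable⟩
  obtain ⟨H, hH⟩ := exists_satSingle_unionCopies (F := F) (T := T) (k := 2 * nF + 2)
    (cliqueWithPendants π)
    (not_contains_host (core F T) hNe (fun a ha => Or.inr (mem_core.1 ha).2) (by omega))
    (by
      rintro (x | z) ⟨i, v⟩
      · exact contains_of_clique hext hT hℓp hℓ hpp' hp' x i v
      · exact contains_of_pendant hext hT hℓp hℓ hpp' hp' z i v)
    (by
      rintro ⟨i, v⟩ ⟨j, w⟩ hne hadj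
      rw [unionCopies_adj_inr_inr] at hadj
      by_cases hij : i = j
      · subst hij
        exact hext.contains_copy hT hmeet (fun h => hne (Prod.ext rfl h))
          (fun h => hadj ⟨rfl, h⟩) i
      · obtain ⟨A, B, pos, s, y, hJ⟩ := exists_isJoin hT v w
        refine hext.contains_copies hJ ?_ hij
        by_cases hA : ∃ t ∈ A, F.Adj s t
        · obtain ⟨t, htA, hst⟩ := hA
          exact Finset.card_pos.2 ⟨s, Finset.mem_inter.2 ⟨hJ.mem_core_left htA hst,
            Finset.mem_union_left _ hJ.mem_left⟩⟩
        · exact Finset.card_pos.2 ⟨y, Finset.mem_inter.2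
            ⟨hJ.mem_core_right hℓp (by simpa using hA), Finset.mem_union_right _ hJ.mem_right⟩⟩)
  refine ⟨_, inferInstance, H, _, by omega, ?_, hH⟩
  simpa using he

end Hits

theorem exists_satSingle_of_goodTree {nF r : ℕ} {F : SimpleGraph (Fin nF)}
    {T : SimpleGraph (Fin r)} (hT : GoodTree F r T) {c : ℕ} (hc : c < r) :
    ∃ (J : Type) (_ : Fintype J) (H : SimpleGraph J) (k : ℕ), nF + 2 ≤ k ∧
      Fintype.card J % r = c ∧ SatSingle F (unionCopies H k T) := by
  match r, T, hT, hc with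
  | 1, T, hT, hc =>
    obtain ⟨J, hJ, H, k, hk, hH⟩ := exists_satSingle_of_card_one hT
    exact ⟨J, hJ, H, k, hk, by omega, hH⟩
  | 2, T, hT, hc => exact exists_satSingle_of_card_two hT hc
  | r + 3, T, hT, hc => exact exists_satSingle_of_three_le hT (by omega) hc

theorem caseIWith_sInf {nF : ℕ} {F : SimpleGraph (Fin nF)} (hF : 1 ≤ Nat.card F.edgeSet)
    (h : ∃ (t : ℕ) (T : SimpleGraph (Fin t)), GoodTree F t T) :
    CaseIWith F (sInf {t : ℕ | ∃ T : SimpleGraph (Fin t), GoodTree F t T}) := by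
  obtain ⟨T, hT⟩ := Nat.sInf_mem (s := {t : ℕ | ∃ T : SimpleGraph (Fin t), GoodTree F t T}) h
  have hmin : ∀ s < sInf {t : ℕ | ∃ T : SimpleGraph (Fin t), GoodTree F t T},
      ∀ T : SimpleGraph (Fin s), ¬ GoodTree F s T :=
    fun s hs T hT => Nat.notMem_of_lt_sInf hs ⟨T, hT⟩
  generalize sInf {t : ℕ | ∃ T : SimpleGraph (Fin t), GoodTree F t T} = r at T hT hmin
  cases r with
  | zero => exact hT.1.connected.nonempty.elim fun x => x.elim0
  | succ q =>
    exact caseIWith_of_minimal hF (fun s hs => hmin s (by omega)) hT.1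
      fun c hc => exists_satSingle_of_goodTree hT hc

/-- The Truszczynski–Tuza dichotomy for single forbidden graphs, with the characterisation of
case (i) in terms of trees. -/
theorem stmt11 {nF : ℕ} (F : SimpleGraph (Fin nF)) (hF : 1 ≤ Nat.card F.edgeSet) :
    ((∃ r : ℕ, CaseIWith F r) ∨ CaseII F) ∧
    ((∃ r : ℕ, CaseIWith F r) ↔ ∃ (t : ℕ) (T : SimpleGraph (Fin t)), GoodTree F t T) ∧
    ((∃ (t : ℕ) (T : SimpleGraph (Fin t)), GoodTree F t T) →
      CaseIWith F (sInf {t : ℕ | ∃ T : SimpleGraph (Fin t), GoodTree F t T})) := by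
  refine ⟨?_, ⟨?_, fun h => ⟨_, caseIWith_sInf hF h⟩⟩, caseIWith_sInf hF⟩
  · by_cases h : ∃ (t : ℕ) (T : SimpleGraph (Fin t)), GoodTree F t T
    · exact Or.inl ⟨_, caseIWith_sInf hF h⟩
    · push Not at h
      exact Or.inr (caseII_of_no_goodTree hF h)
  · rintro ⟨r, hr⟩
    exact exists_goodTree_of_caseIWith hF hr
end

section
/- For every tree T whose number of vertices lies in {1,2,3,4,5,7}, there exists a subtree T' of T such that |V(T')| and |V(T)| are coprime and, for all vertices v ∈ T' and w ∈ T, there is an integer k ≥ 0 such that the tree (T' ∪ kT) + v𝐰 contains a subgraph isomorphic to T whose vertex set contains v. -/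
open SimpleGraph Filter Topology

/-- `(T' ∪ kT) + v𝐰`: the tree obtained from the disjoint union of the subtree of `T` induced on
`s` with `k` copies of `T`, by joining `v ∈ s` to the copy of `w` in each of the `k` copies. -/
def treeConstr {t : ℕ} (T : SimpleGraph (Fin t)) (s : Set (Fin t)) (v : ↥s) (w : Fin t)
    (k : ℕ) : SimpleGraph (↥s ⊕ Fin k × Fin t) :=
  SimpleGraph.fromRel (fun x y =>
    match x, y with
    | Sum.inl a, Sum.inl b => T.Adj a.1 b.1
    | Sum.inr (i, a), Sum.inr (j, b) => i = j ∧ T.Adj a b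
    | Sum.inl a, Sum.inr (_, b) => a = v ∧ b = w
    | _, _ => False)

/-- A list `p` encodes the tree on `0, …, p.length` in which the parent of `i + 1` is `p[i]`;
`parentAdj p` is adjacency in this tree. -/
def parentAdj (p : List ℕ) (x y : ℕ) : Bool :=
  (Nat.ble 1 x && Nat.beq (p.getD (x - 1) 0) y) || (Nat.ble 1 y && Nat.beq (p.getD (y - 1) 0) x)

/-- Backtracking search: can the partial embedding `im` be extended, within the vertices `cands`
of the graph `adj`, by vertices with parents `ps`, to an embedding satisfying `good`? -/
def extendable {α : Type*} [DecidableEq α] (adj : α → α → Bool) (cands : List α)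
    (good : List α → Bool) : List ℕ → List α → Bool
  | [], im => good im
  | q :: ps, im => cands.any fun y =>
      im[q]?.any (adj · y) && (!decide (y ∈ im) && extendable adj cands good ps (im ++ [y]))

/-- Does the tree with parent list `p` embed into the graph `adj` on `cands`? -/
def embeddable {α : Type*} [DecidableEq α] (adj : α → α → Bool) (cands : List α)
    (good : List α → Bool) (p : List ℕ) : Bool :=
  cands.any fun h => extendable adj cands good p [h]

/-- Representatives of the isomorphism classes of trees with `n + 1` vertices, `n ≤ 6`. -/
def treeReps : ℕ → List (List ℕ)
  | 0 => [[]]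
  | 1 => [[0]]
  | 2 => [[0, 0]]
  | 3 => [[0, 0, 0], [0, 0, 1]]
  | 4 => [[0, 0, 0, 0], [0, 0, 0, 1], [0, 0, 1, 2]]
  | 5 => [[0, 0, 0, 0, 0], [0, 0, 0, 0, 1], [0, 0, 0, 1, 1], [0, 0, 0, 1, 2], [0, 0, 0, 1, 4],
      [0, 0, 1, 2, 3]]
  | 6 => [[0, 0, 0, 0, 0, 0], [0, 0, 0, 0, 0, 1], [0, 0, 0, 3, 3, 0], [0, 0, 0, 0, 1, 2],
      [0, 0, 0, 0, 1, 5], [0, 0, 0, 3, 3, 1], [0, 0, 0, 1, 2, 3], [0, 0, 0, 1, 2, 4],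
      [0, 1, 1, 0, 4, 4], [0, 0, 0, 1, 4, 5], [0, 0, 1, 2, 3, 4]]
  | _ => []

/-- Adjacency in `(T' ∪ kT) + v𝐰` for the tree `T` with parent list `p`: the vertices of `T'` are
the pairs `(0, x)`, those of the copies of `T` are the pairs `(i, x)` with `1 ≤ i ≤ k`. -/
def hostAdj (p : List ℕ) (v w : ℕ) (a b : ℕ × ℕ) : Bool :=
  (Nat.beq a.1 b.1 && parentAdj p a.2 b.2) ||
    ((Nat.beq a.1 0 && (Nat.ble 1 b.1 && (Nat.beq a.2 v && Nat.beq b.2 w))) ||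
      (Nat.beq b.1 0 && (Nat.ble 1 a.1 && (Nat.beq b.2 v && Nat.beq a.2 w))))

/-- The vertices of `(T' ∪ kT) + v𝐰`, where `T` has `n` vertices and `T'` consists of the first `m`
of them. Those where an embedding is most likely to start come first. -/
def hostVerts (n m k v w : ℕ) : List (ℕ × ℕ) :=
  (0, v) :: (List.range k).map (fun i => (i + 1, w)) ++ (List.range m).map (fun x => (0, x)) ++
    (List.range k).flatMap fun i => (List.range n).map fun x => (i + 1, x)

/-- Do the first `m` vertices of the tree with parent list `p` form a suitable `T'`, with `k` copies
of `T` for every `v` and `w`? -/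
def suitable (p : List ℕ) (m k : ℕ) : Bool :=
  (List.range m).all fun v => (List.range (p.length + 1)).all fun w =>
    embeddable (hostAdj p v w) (hostVerts (p.length + 1) m k v w) (fun L => decide ((0, v) ∈ L)) p

/-- The number of vertices of `T'` and the number of copies of `T` used for the tree with parent
list `p`. -/
def subtreeParams (p : List ℕ) : ℕ × ℕ :=
  if p = [0, 0, 0, 3, 3, 0] ∨ p = [0, 0, 0, 3, 3, 1] then (6, 3)
  else if p = [0, 1, 1, 0, 4, 4] then (1, 3) else (1, 6)

theorem suitable_subtreeParams : ∀ n ∈ [0, 1, 2, 3, 4, 6], ∀ p ∈ treeReps n,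
    1 ≤ (subtreeParams p).1 ∧ (subtreeParams p).1 ≤ n + 1 ∧
      Nat.Coprime (subtreeParams p).1 (n + 1) ∧
      suitable p (subtreeParams p).1 (subtreeParams p).2 = true := by
  decide +kernel

theorem treeReps_spec : ∀ n ≤ 6, ∀ p ∈ treeReps n,
    p.length = n ∧ ∀ i < n, p.getD i 0 ≤ i := by
  decide

/-- The sum of the squares of the vertex degrees of the tree with parent list `p`. -/
def degreeSq (p : List ℕ) : ℕ :=
  ((List.range (p.length + 1)).map fun x => (p.count x + min x 1) ^ 2).sum

theorem exists_embeddable_treeReps : ∀ n < 6, ∀ p ∈ treeReps n, ∀ j ≤ n, ∃ r ∈ treeReps (n + 1),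
    degreeSq r = degreeSq (p ++ [j]) ∧
      embeddable (parentAdj (p ++ [j])) (List.range (n + 2)) (fun _ => true) r = true := by
  decide +kernel

theorem exists_of_extendable {α : Type*} [DecidableEq α] {adj : α → α → Bool} {cands : List α}
    {good : List α → Bool} : ∀ {ps : List ℕ} {im : List α}, im.Nodup → im ⊆ cands →
      extendable adj cands good ps im = true →
      ∃ L : List α, im <+: L ∧ L.length = im.length + ps.length ∧ L.Nodup ∧ L ⊆ cands ∧
        good L = true ∧ ∀ i < ps.length, ∃ x y, L[ps.getD i 0]? = some x ∧
          L[im.length + i]? = some y ∧ adj x y = true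
  | [], im, hd, hs, h => ⟨im, List.prefix_rfl, rfl, hd, hs, h, by simp⟩
  | q :: ps, im, hd, hs, h => by
    simp only [extendable, List.any_eq_true, Bool.and_eq_true, Bool.not_eq_true',
      decide_eq_false_iff_not, Option.any_eq_true] at h
    obtain ⟨y, hy, ⟨x, hx, hxy⟩, hyim, hext⟩ := h
    obtain ⟨L, hpre, hlen, hLd, hLs, hgood, hadj⟩ := exists_of_extendable
      (List.nodup_append.2 ⟨hd, by simp, by rintro a ha b hb rfl; simp_all⟩)
      (by intro a ha; simp at ha; rcases ha with ha | rfl; exacts [hs ha, hy]) hext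
    refine ⟨L, (List.prefix_append _ _).trans hpre, by simp at hlen ⊢; omega, hLd, hLs, hgood, ?_⟩
    rintro (_ | i) hi
    · refine ⟨x, y, ?_, ?_, hxy⟩
      · exact List.prefix_iff_getElem?.1 ((List.prefix_append _ _).trans hpre) q
          (List.getElem?_eq_some_iff.1 hx).1 ▸ by simpa using (List.getElem?_eq_some_iff.1 hx).2
      · have := List.prefix_iff_getElem?.1 hpre im.length (by simp)
        simpa using this
    · obtain ⟨x, y, h1, h2, h3⟩ := hadj i (by simpa using hi)
      refine ⟨x, y, by simpa using h1, ?_, h3⟩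
      rw [← h2]
      congr 1
      simp
      omega

/-- `φ` lists the distinct vertices of a copy in `G` of the tree with parent list `p`. -/
def IsTreeCopy {V : Type*} (G : SimpleGraph V) (p : List ℕ) (φ : ℕ → V) : Prop :=
  Set.InjOn φ (Set.Iio (p.length + 1)) ∧ ∀ i < p.length, G.Adj (φ (p.getD i 0)) (φ (i + 1))

theorem exists_of_embeddable {α : Type*} [DecidableEq α] [Inhabited α] {adj : α → α → Bool}
    {cands : List α} {good : List α → Bool} {p : List ℕ}
    (h : embeddable adj cands good p = true) :
    ∃ F : ℕ → α, Set.InjOn F (Set.Iio (p.length + 1)) ∧ (∀ i < p.length + 1, F i ∈ cands) ∧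
      (∀ i < p.length, adj (F (p.getD i 0)) (F (i + 1)) = true) ∧
      good ((List.range (p.length + 1)).map F) = true := by
  simp only [embeddable, List.any_eq_true] at h
  obtain ⟨r, hr, hext⟩ := h
  obtain ⟨L, -, hlen, hd, hs, hgood, hadj⟩ :=
    exists_of_extendable (List.nodup_singleton r) (by simpa using hr) hext
  have hlen' : L.length = p.length + 1 := by simpa [add_comm] using hlen
  have hF : ∀ i (hi : i < p.length + 1), L.getD i default = L[i] := fun i hi => by
    rw [List.getD_eq_getElem]
  refine ⟨fun i => L.getD i default, ?_, ?_, ?_, ?_⟩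
  · intro i hi j hj hij
    rw [Set.mem_Iio] at hi hj
    simp only [hF i hi, hF j hj] at hij
    exact (hd.getElem_inj_iff).1 hij
  · intro i hi
    simp only [hF i hi]
    exact hs (List.getElem_mem _)
  · intro i hi
    obtain ⟨x, y, hx, hy, hxy⟩ := hadj i hi
    rw [List.length_singleton, add_comm] at hy
    simpa only [List.getD_eq_getElem?_getD (l := L), hx, hy, Option.getD_some] using hxy
  · convert hgood
    apply List.ext_getElem
    · simp [hlen']
    · intro i h1 h2
      simp [h2]

theorem IsTreeCopy.adj_of_parentAdj {V : Type*} {G : SimpleGraph V} {p : List ℕ} {φ : ℕ → V}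
    (h : IsTreeCopy G p φ) {x y : ℕ} (hx : x < p.length + 1) (hy : y < p.length + 1)
    (hxy : parentAdj p x y = true) : G.Adj (φ x) (φ y) := by
  simp only [parentAdj, Bool.or_eq_true, Bool.and_eq_true, Nat.ble_eq, Nat.beq_eq] at hxy
  rcases hxy with ⟨h1, rfl⟩ | ⟨h1, rfl⟩
  · have := h.2 (x - 1) (by omega)
    rw [Nat.sub_add_cancel h1] at this
    exact this.symm
  · have := h.2 (y - 1) (by omega)
    rwa [Nat.sub_add_cancel h1] at this

theorem parentAdj_comm (p : List ℕ) (x y : ℕ) : parentAdj p x y = parentAdj p y x :=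
  Bool.or_comm _ _

theorem connected_of_parents {W : Type*} {G : SimpleGraph W} {p : List ℕ} {m : ℕ} (hm : 1 ≤ m)
    (hp : ∀ i, i + 1 < m → p.getD i 0 ≤ i) (ψ : ∀ i, i < m → W)
    (hadj : ∀ i (hi : i + 1 < m), G.Adj (ψ (p.getD i 0) ((hp i hi).trans_lt (by omega)))
      (ψ (i + 1) hi))
    (hψ : ∀ x, ∃ i hi, ψ i hi = x) : G.Connected := by
  refine (connected_iff_exists_forall_reachable _).2 ⟨ψ 0 hm, fun x => ?_⟩
  obtain ⟨i, hi, rfl⟩ := hψ x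
  induction i using Nat.strong_induction_on with
  | _ i ih =>
    rcases i with _ | i
    · rfl
    · exact (ih _ (Nat.lt_succ_of_le (hp i hi)) _).trans (hadj i hi).reachable

theorem IsTreeCopy.parentAdj_of_adj {V : Type*} {T : SimpleGraph V} (hT : T.IsTree) {p : List ℕ}
    {φ : ℕ → V} (h : IsTreeCopy T p φ) (hp : ∀ i < p.length, p.getD i 0 ≤ i)
    (hsurj : ∀ x, ∃ i < p.length + 1, φ i = x) {x y : ℕ} (hx : x < p.length + 1)
    (hy : y < p.length + 1) (hxy : T.Adj (φ x) (φ y)) : parentAdj p x y = true := by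
  let G : SimpleGraph V := fromRel fun a b =>
    ∃ i < p.length + 1, ∃ j < p.length + 1, φ i = a ∧ φ j = b ∧ parentAdj p i j = true
  have hG : G.Connected := by
    refine connected_of_parents (p := p) (m := p.length + 1) (by omega)
      (fun i hi => hp i (by omega)) (fun i _ => φ i) (fun i hi => ?_)
      (fun x => (hsurj x).imp fun i hi => ⟨hi.1, hi.2⟩)
    have := h.2 i (by omega)
    have := hp i (by omega)
    refine (fromRel_adj _ _ _).2 ⟨(h.2 i (by omega)).ne, Or.inl ⟨_, by omega, _, hi, rfl, rfl, ?_⟩⟩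
    simp [parentAdj]
  have hle : G ≤ T := by
    rintro a b hab
    obtain ⟨-, ⟨i, hi, j, hj, rfl, rfl, hij⟩ | ⟨i, hi, j, hj, rfl, rfl, hij⟩⟩ :=
      (fromRel_adj _ _ _).1 hab
    · exact h.adj_of_parentAdj hi hj hij
    · exact (h.adj_of_parentAdj hi hj hij).symm
  have := (isTree_iff_minimal_connected.1 hT).2 hG hle hxy
  obtain ⟨-, ⟨i, hi, j, hj, h1, h2, hij⟩ | ⟨i, hi, j, hj, h1, h2, hij⟩⟩ :=
    (fromRel_adj _ _ _).1 this
  · rwa [← h.1 hi hx h1, ← h.1 hj hy h2]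
  · rwa [parentAdj_comm, ← h.1 hi hy h1, ← h.1 hj hx h2]

theorem exists_isTreeCopy (n : ℕ) (hn : n ≤ 6) : ∀ (V : Type) [Fintype V] (T : SimpleGraph V),
    T.IsTree → Fintype.card V = n + 1 → ∃ p ∈ treeReps n, ∃ φ : ℕ → V, IsTreeCopy T p φ := by
  classical
  induction n with
  | zero =>
    intro V _ T hT _
    obtain ⟨x⟩ := hT.connected.nonempty
    exact ⟨[], by simp [treeReps], fun _ => x, by
      intro i hi j hj _; simp at hi hj; omega, by simp⟩
  | succ n ih =>
    intro V _ T hT hV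
    have : Nontrivial V := Fintype.one_lt_card_iff_nontrivial.1 (by omega)
    obtain ⟨l, hl⟩ := hT.exists_vert_degree_one_of_nontrivial
    obtain ⟨u, hlu, -⟩ := degree_eq_one_iff_existsUnique_adj.1 hl
    have hul : u ∈ ({l}ᶜ : Set V) := by simpa using hlu.ne'
    have hcard : Fintype.card ({l}ᶜ : Set V) = n + 1 := by
      rw [Fintype.card_compl_set]; simp [hV]
    obtain ⟨p, hp, φ, hφ⟩ := ih (by omega) _ (T.induce {l}ᶜ)
      ⟨hT.connected.induce_compl_singleton_of_degree_eq_one hl, hT.isAcyclic.induce _⟩ hcard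
    obtain ⟨hlen, hpar⟩ := treeReps_spec n (by omega) p hp
    obtain ⟨j, hj, hju⟩ : ∃ j < n + 1, φ j = ⟨u, hul⟩ := by
      have hinj : Function.Injective fun i : Fin (n + 1) => φ i := fun a b hab =>
        Fin.ext (hφ.1 (by simp [hlen]; omega) (by simp [hlen]; omega) hab)
      obtain ⟨i, hi⟩ := ((Fintype.bijective_iff_injective_and_card _).2
        ⟨hinj, by simp [hcard]⟩).2 ⟨u, hul⟩
      exact ⟨i, i.2, hi⟩
    let χ : ℕ → V := fun i => if i < n + 1 then φ i else l
    have hχ : IsTreeCopy T (p ++ [j]) χ := by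
      constructor
      · intro a ha b hb hab
        simp only [List.length_append, hlen, List.length_singleton, Set.mem_Iio] at ha hb
        have hne : ∀ i, (φ i : V) ≠ l := fun i => (φ i).2
        by_cases h1 : a < n + 1 <;> by_cases h2 : b < n + 1 <;> simp only [χ, h1, h2, if_true,
          if_false] at hab
        · exact hφ.1 (by simpa [hlen] using h1) (by simpa [hlen] using h2) (Subtype.ext hab)
        · exact absurd hab (hne a)
        · exact absurd hab.symm (hne b)
        · omega
      · intro i hi
        simp only [List.length_append, hlen, List.length_singleton] at hi
        rcases Nat.lt_succ_iff_lt_or_eq.1 hi with hi | rfl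
        · have := hpar i hi
          have h2 := hφ.2 i (by omega)
          rw [List.getD_append _ _ _ _ (by omega)]
          simp only [χ, if_pos (show p.getD i 0 < n + 1 by omega),
            if_pos (show i + 1 < n + 1 by omega)]
          exact h2
        · rw [List.getD_append_right _ _ _ _ (by omega)]
          simpa only [hlen, χ, hj, hju, Nat.sub_self, List.getD_cons_zero, if_true, lt_irrefl, if_false]
            using hlu.symm
    obtain ⟨r, hr, -, hemb⟩ := exists_embeddable_treeReps n (by omega) p hp j (by omega)
    obtain ⟨hrlen, hrpar⟩ := treeReps_spec (n + 1) hn r hr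
    obtain ⟨F, hFinj, hFmem, hFadj, -⟩ := exists_of_embeddable hemb
    have hmem : ∀ i < n + 2, F i < (p ++ [j]).length + 1 := fun i hi => by
      simpa [hlen, Nat.lt_succ_iff] using hFmem i (by omega)
    refine ⟨r, hr, χ ∘ F, hχ.1.comp hFinj fun i hi => hmem i (by rwa [Set.mem_Iio, hrlen] at hi),
      fun i hi => hχ.adj_of_parentAdj (hmem _ ?_) (hmem _ (by omega)) (hFadj i hi)⟩
    have := hrpar i (by omega)
    omega

theorem mem_hostVerts {n m k v w : ℕ} (hv : v < m) (hw : w < n) {a : ℕ × ℕ}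
    (ha : a ∈ hostVerts n m k v w) :
    (∃ x < m, a = (0, x)) ∨ ∃ i < k, ∃ x < n, a = (i + 1, x) := by
  simp only [hostVerts, List.mem_append, List.mem_cons, List.mem_map, List.mem_range,
    List.mem_flatMap] at ha
  rcases ha with ((rfl | ⟨i, hi, rfl⟩) | ⟨x, hx, rfl⟩) | ⟨i, hi, x, hx, rfl⟩
  exacts [.inl ⟨v, hv, rfl⟩, .inr ⟨i, hi, w, hw, rfl⟩, .inl ⟨x, hx, rfl⟩, .inr ⟨i, hi, x, hx, rfl⟩]

theorem exists_embedding_of_embeddable {t : ℕ} {T : SimpleGraph (Fin t)} (hT : T.IsTree)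
    {p : List ℕ} (hp : ∀ i < p.length, p.getD i 0 ≤ i) {φ : ℕ → Fin t}
    (hφ : IsTreeCopy T p φ) (hsurj : ∀ x, ∃ i < p.length + 1, φ i = x) {m k v w : ℕ}
    (hm : m ≤ p.length + 1) (hv : v < m) (hw : w < p.length + 1)
    (h : embeddable (hostAdj p v w) (hostVerts (p.length + 1) m k v w)
      (fun L => decide ((0, v) ∈ L)) p = true) :
    ∃ f : Fin t ↪ (↥(φ '' Set.Iio m) ⊕ Fin k × Fin t),
      (∀ a b : Fin t, T.Adj a b →
        (treeConstr T (φ '' Set.Iio m) ⟨φ v, v, hv, rfl⟩ (φ w) k).Adj (f a) (f b)) ∧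
      ∃ a : Fin t, f a = Sum.inl ⟨φ v, v, hv, rfl⟩ := by
  obtain ⟨F, hFinj, hFmem, hFadj, hFv⟩ := exists_of_embeddable h
  choose ι hι hφι using hsurj
  let dec : ℕ × ℕ → ↥(φ '' Set.Iio m) ⊕ Fin k × Fin t := fun a =>
    if ha : a.1 - 1 < k ∧ a.1 ≠ 0 then Sum.inr (⟨a.1 - 1, ha.1⟩, φ a.2)
    else if hx : a.2 < m then Sum.inl ⟨φ a.2, a.2, hx, rfl⟩ else Sum.inl ⟨φ v, v, hv, rfl⟩
  have dec_zero : ∀ x (hx : x < m), dec (0, x) = Sum.inl ⟨φ x, x, hx, rfl⟩ := fun x hx => by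
    simp [dec, hx]
  have dec_succ : ∀ i (hi : i < k) x, dec (i + 1, x) = Sum.inr (⟨i, hi⟩, φ x) :=
    fun i hi x => by simp [dec, hi]
  have hφinj : ∀ x < p.length + 1, ∀ y < p.length + 1, φ x = φ y → x = y :=
    fun x hx y hy hxy => hφ.1 hx hy hxy
  have hval : ∀ i < p.length + 1, (∃ x < m, F i = (0, x)) ∨
      ∃ c < k, ∃ x < p.length + 1, F i = (c + 1, x) := fun i hi => mem_hostVerts hv hw (hFmem i hi)
  have hdec : ∀ i < p.length + 1, ∀ j < p.length + 1, dec (F i) = dec (F j) → i = j := by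
    intro i hi j hj hij
    apply hFinj hi hj
    rcases hval i hi with ⟨x, hx, hFi⟩ | ⟨c, hc, x, hx, hFi⟩ <;>
    rcases hval j hj with ⟨y, hy, hFj⟩ | ⟨d, hd, y, hy, hFj⟩
    · rw [hFi, hFj, dec_zero x hx, dec_zero y hy] at hij
      rw [hFi, hFj, hφinj x (by omega) y (by omega) 
        (congrArg Subtype.val (Sum.inl.inj hij))]
    · rw [hFi, hFj, dec_zero x hx, dec_succ d hd] at hij
      simp at hij
    · rw [hFi, hFj, dec_succ c hc, dec_zero y hy] at hij
      simp at hij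
    · rw [hFi, hFj, dec_succ c hc, dec_succ d hd] at hij
      simp only [Sum.inr.injEq, Prod.mk.injEq, Fin.mk.injEq] at hij
      rw [hFi, hFj, hij.1, hφinj x hx y hy hij.2]
  have hadj : ∀ i < p.length + 1, ∀ j < p.length + 1, i ≠ j →
      hostAdj p v w (F i) (F j) = true →
      (treeConstr T (φ '' Set.Iio m) ⟨φ v, v, hv, rfl⟩ (φ w) k).Adj (dec (F i)) (dec (F j)) := by
    intro i hi j hj hne hij
    refine (fromRel_adj _ _ _).2 ⟨fun h => hne (hdec i hi j hj h), ?_⟩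
    rcases hval i hi with ⟨x, hx, hFi⟩ | ⟨c, hc, x, hx, hFi⟩ <;>
    rcases hval j hj with ⟨y, hy, hFj⟩ | ⟨d, hd, y, hy, hFj⟩ <;>
    rw [hFi, hFj] at hij ⊢ <;>
    simp [hostAdj] at hij
    · rw [dec_zero x hx, dec_zero y hy]
      exact Or.inl (hφ.adj_of_parentAdj (by omega) (by omega) hij)
    · rw [dec_zero x hx, dec_succ d hd]
      obtain ⟨rfl, rfl⟩ := hij
      exact Or.inl ⟨rfl, rfl⟩
    · rw [dec_succ c hc, dec_zero y hy]
      obtain ⟨rfl, rfl⟩ := hij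
      exact Or.inr ⟨rfl, rfl⟩
    · rw [dec_succ c hc, dec_succ d hd]
      exact Or.inl ⟨by simpa using hij.1, hφ.adj_of_parentAdj hx hy hij.2⟩
  refine ⟨⟨fun a => dec (F (ι a)), fun a b hab => ?_⟩, fun a b hab => ?_, ?_⟩
  · rw [← hφι a, ← hφι b, hdec _ (hι a) _ (hι b) hab]
  · have hpar := hφ.parentAdj_of_adj hT hp (fun x => ⟨ι x, hι x, hφι x⟩) (hι a) (hι b)
      (by rwa [hφι, hφι])
    have hne : ι a ≠ ι b := fun h => hab.ne (by rw [← hφι a, ← hφι b, h])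
    have ha := hι a
    have hb := hι b
    simp only [parentAdj, Bool.or_eq_true, Bool.and_eq_true, Nat.ble_eq, Nat.beq_eq] at hpar
    rcases hpar with ⟨h1, h2⟩ | ⟨h1, h2⟩
    · have := hFadj (ι a - 1) (by omega)
      rw [Nat.sub_add_cancel h1, h2] at this
      exact (hadj _ hb _ ha hne.symm this).symm
    · have := hFadj (ι b - 1) (by omega)
      rw [Nat.sub_add_cancel h1, h2] at this
      exact hadj _ ha _ hb hne this
  · simp only [decide_eq_true_eq, List.mem_map, List.mem_range] at hFv
    obtain ⟨i, hi, hFi⟩ := hFv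
    have : ι (φ i) = i := hφinj _ (hι _) _ hi (hφι _)
    exact ⟨φ i, (congrArg (dec ∘ F) this).trans ((congrArg dec hFi).trans (dec_zero v hv))⟩

/-- For every tree `T` on `1, 2, 3, 4, 5` or `7` vertices there is a subtree `T'` (the subgraph
induced on a connected set `s` of vertices) whose order is coprime to that of `T` and such that
for all `v ∈ T'` and `w ∈ T`, for some `k ≥ 0` the tree `(T' ∪ kT) + v𝐰` contains a copy of `T`
containing `v`. -/
theorem stmt12 (t : ℕ) (ht : t ∈ ({1, 2, 3, 4, 5, 7} : Set ℕ)) (T : SimpleGraph (Fin t))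
    (hT : T.IsTree) :
    ∃ s : Set (Fin t), (SimpleGraph.induce s T).Connected ∧ Nat.Coprime (Nat.card ↥s) t ∧
      ∀ (v : ↥s) (w : Fin t), ∃ k : ℕ, ∃ f : Fin t ↪ (↥s ⊕ Fin k × Fin t),
        (∀ a b : Fin t, T.Adj a b → (treeConstr T s v w k).Adj (f a) (f b)) ∧
        ∃ a : Fin t, f a = Sum.inl v := by
  obtain ⟨n, rfl, hn⟩ : ∃ n, t = n + 1 ∧ n ∈ [0, 1, 2, 3, 4, 6] := by
    simp only [Set.mem_insert_iff, Set.mem_singleton_iff] at ht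
    exact ⟨t - 1, by omega, by simp; omega⟩
  have hn6 : n ≤ 6 := by simp at hn; omega
  obtain ⟨p, hp, φ, hφ⟩ := exists_isTreeCopy n hn6 _ T hT (Fintype.card_fin _)
  obtain ⟨rfl, hpar⟩ := treeReps_spec n hn6 p hp
  obtain ⟨hm1, hm, hcop, hsuit⟩ := suitable_subtreeParams _ hn p hp
  generalize (subtreeParams p).1 = m at hm1 hm hcop hsuit
  generalize (subtreeParams p).2 = k at hsuit
  have hsurj : ∀ x, ∃ i < p.length + 1, φ i = x := fun x => by
    have hinj : Function.Injective fun i : Fin (p.length + 1) => φ i :=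
      fun a b hab => Fin.ext (hφ.1 a.2 b.2 hab)
    obtain ⟨i, hi⟩ := (Finite.injective_iff_surjective.1 hinj) x
    exact ⟨i, i.2, hi⟩
  refine ⟨φ '' Set.Iio m, ?_, ?_, ?_⟩
  · refine connected_of_parents hm1 (fun i hi => hpar i (by omega))
      (fun i hi => ⟨φ i, i, hi, rfl⟩) (fun i hi => hφ.2 i (by omega)) ?_
    rintro ⟨_, i, hi, rfl⟩
    exact ⟨i, hi, rfl⟩
  · rw [Nat.card_image_of_injOn (hφ.1.mono (Set.Iio_subset_Iio hm))]
    simpa using hcop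
  · rintro ⟨_, v, hv, rfl⟩ w
    obtain ⟨w, hw, rfl⟩ := hsurj w
    simp only [suitable, List.all_eq_true, List.mem_range] at hsuit
    exact ⟨k, exists_embedding_of_embeddable hT hpar hφ hsurj hm hv hw (hsuit v hv w hw)⟩
end
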